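/- arXiv:1001.0879 — 4 statements merged into one kernel-verified Lean document; each statement's English description precedes it below -/
import Mathlib

section
/- Fix integers n ≥ 1, d ≥ 2 and a real a > 0. There exists an online prediction strategy (mAAR(2a)) whose predictions always lie in the probability simplex Δ ⊂ ℝ^d and such that for every X > 0, every positive integer T, every sequence of signals x_1, …, x_T ∈ ℝ^n with ‖x_t‖_∞ ≤ X for all t, every sequence of outcomes y_1, …, y_T ∈ Δ, and every α ∈ ℝ^{n(d−1)}: Σ_{t=1}^T λ(y_t, γ_t) ≤ Σ_{t=1}^T λ(y_t, ξ(α, x_t)) + 2a‖α‖_2² + (n(d−1)/2)·ln(T X²/a + 1), where γ_t is the strategy's prediction at step t. -/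
/-!
The strategy is the aggregating algorithm with learning rate one, applied to the linear experts
under the Gaussian prior density proportional to `exp (-2 a ‖α‖²)`. Two facts carry the proof.

*Mixability* (`exists_mixture`). Whatever the weights on the experts, one prediction in the simplex
has exponentiated negative loss at least the weighted average of those of the experts, for every
outcome in the simplex. By a minimax argument (`exists_vertexLoss_le`) and weighted AM-GM this
reduces to the pointwise inequality `∑ i, p i * exp (2 * (v i - p ⬝ v)) ≤ exp ‖v‖²`, which is
Hoeffding's lemma: the range of `v` is at most `√2 ‖v‖` (`hoeffding_simplex`). Nothing requires the
experts to predict inside the simplex. Hence the total weight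
`∫ exp (-2 a ‖u‖² - loss of u so far) du` is multiplied at each step by at most
`exp (-loss of the learner)`.

*A lower bound on the final weight* (`exp_neg_mul_le_integral_exp_neg_leastSquares`). The exponent
is a positive definite quadratic whose second-order part has diagonal entries at most
`b = 2 a + 2 T X²`. After centring at an arbitrary expert `α`, comparison with the isotropic
Gaussian `exp (-b ‖u‖²)` through `exp x ≥ 1 + x` bounds the integral below by
`(π / b) ^ (N / 2)` times the weight at `α`, with `N = n (d - 1)`: linear and off-diagonal terms
integrate to zero, and the diagonal ones have the right sign. The initial weight is
`(π / (2 a)) ^ (N / 2)`, and the quotient of the two normalisations gives the logarithmic term.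
-/



open Finset MeasureTheory

noncomputable section

/-- Brier loss: squared Euclidean distance between prediction and outcome. -/
def brier {d : ℕ} (y γ : Fin d → ℝ) : ℝ := ∑ i, (γ i - y i) ^ 2

/-- The probability simplex in ℝ^d. -/
def probSimplex (d : ℕ) : Set (Fin d → ℝ) :=
  {y | (∀ i, 0 ≤ y i) ∧ ∑ i, y i = 1}

/-- Linear expert prediction: ξ_i = 1/d + α_i'x for i < d-1, and the last
component is one minus the sum of the others. -/
def expertPred (n d : ℕ) (α : Fin (d - 1) → Fin n → ℝ) (x : Fin n → ℝ) : Fin d → ℝ :=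
  fun i =>
    if h : (i : ℕ) < d - 1 then (1 : ℝ) / d + ∑ j, α ⟨i, h⟩ j * x j
    else 1 - ∑ k : Fin (d - 1), ((1 : ℝ) / d + ∑ j, α k j * x j)

/-! ### Mixability of the Brier game -/

/-- The Brier loss of the prediction `γ` when the outcome is the `i`-th vertex of the simplex. -/
def vertexLoss {d : ℕ} (i : Fin d) (γ : Fin d → ℝ) : ℝ := ∑ k, γ k ^ 2 - 2 * γ i + 1

lemma brier_eq {d : ℕ} {y : Fin d → ℝ} (hy : y ∈ probSimplex d) (γ : Fin d → ℝ) :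
    brier y γ = ∑ i, y i * vertexLoss i γ - 1 + ∑ i, y i ^ 2 := by
  have h1 : ∑ i, y i * vertexLoss i γ
      = (∑ i, y i) * (∑ k, γ k ^ 2 + 1) - 2 * ∑ i, γ i * y i := by
    rw [Finset.sum_mul, Finset.mul_sum, ← Finset.sum_sub_distrib]
    exact Finset.sum_congr rfl fun i _ => by unfold vertexLoss; ring
  have h2 : brier y γ = ∑ i, γ i ^ 2 - 2 * ∑ i, γ i * y i + ∑ i, y i ^ 2 := by
    rw [Finset.mul_sum, ← Finset.sum_sub_distrib, ← Finset.sum_add_distrib]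
    exact Finset.sum_congr rfl fun i _ => by ring
  rw [h1, h2, hy.2]; ring

/-- The average vertex loss under `p` of the prediction `p` itself is the Gini entropy of `p`. -/
lemma sum_mul_vertexLoss_self {d : ℕ} {p : Fin d → ℝ} (hp : p ∈ probSimplex d) :
    ∑ i, p i * vertexLoss i p = 1 - ∑ i, p i ^ 2 := by
  have h := brier_eq hp p
  have h0 : brier p p = 0 := by simp [brier]
  linarith

/-- Hoeffding's lemma for a random variable with value `v i` with probability `p i`, in which the
squared range is bounded by twice the squared Euclidean norm of `v`. -/
lemma hoeffding_simplex {d : ℕ} {p : Fin d → ℝ} (hp : p ∈ probSimplex d) (v : Fin d → ℝ) :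
    ∑ i, p i * Real.exp (2 * (v i - ∑ k, p k * v k)) ≤ Real.exp (∑ i, v i ^ 2) := by
  have hne : Nonempty (Fin d) := by
    by_contra h
    rw [not_nonempty_iff] at h
    have := hp.2
    simp at this
  let μ : Measure (Fin d) := ∑ i, ENNReal.ofReal (p i) • Measure.dirac i
  have hint : ∀ f : Fin d → ℝ, ∫ i, f i ∂μ = ∑ i, p i * f i := by
    intro f
    simp only [μ]
    rw [integral_finsetSum_measure]
    · refine Finset.sum_congr rfl fun i _ => ?_
      rw [integral_smul_measure, integral_dirac, ENNReal.toReal_ofReal (hp.1 i), smul_eq_mul]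
    · intro i _
      exact (integrable_dirac (by simp)).smul_measure ENNReal.ofReal_ne_top
  have : IsProbabilityMeasure μ := by
    constructor
    simp only [μ, Measure.coe_finsetSum, Finset.sum_apply, Measure.smul_apply, smul_eq_mul,
      measure_univ, mul_one]
    rw [← ENNReal.ofReal_sum_of_nonneg fun i _ => hp.1 i, hp.2, ENNReal.ofReal_one]
  obtain ⟨i, hi⟩ := Finite.exists_min v
  obtain ⟨j, hj⟩ := Finite.exists_max v
  have hsub := ProbabilityTheory.hasSubgaussianMGF_of_mem_Icc (μ := μ) (X := v) (a := v i)
    (b := v j) (measurable_of_finite v).aemeasurable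
    (Filter.Eventually.of_forall fun k => ⟨hi k, hj k⟩)
  have h := hsub.mgf_le 2
  rw [ProbabilityTheory.mgf, hint, hint] at h
  refine h.trans (Real.exp_le_exp.mpr ?_)
  have hc : (((‖v j - v i‖₊ / 2) ^ 2 : NNReal) : ℝ) = (v j - v i) ^ 2 / 4 := by
    push_cast
    rw [div_pow, Real.norm_eq_abs, sq_abs]; norm_num
  rw [hc]
  have hnn : ∀ k ∈ Finset.univ, 0 ≤ v k ^ 2 := fun k _ => sq_nonneg _
  rcases eq_or_ne i j with rfl | hij
  · simpa using Finset.sum_nonneg hnn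
  · have : v i ^ 2 + v j ^ 2 ≤ ∑ k, v k ^ 2 := by
      rw [← Finset.sum_pair (f := fun k => v k ^ 2) hij]
      exact Finset.sum_le_sum_of_subset_of_nonneg (Finset.subset_univ _)
        fun k hk _ => hnn k (Finset.mem_univ k)
    nlinarith [sq_nonneg (v i + v j)]

/-- Pointwise form of the mixability of the Brier game with learning rate one: under the map
`γ ↦ (exp (-vertexLoss i γ))_i` every point `ξ` lies below the hyperplane supporting the image of
the simplex at `p`. The point `ξ` need not belong to the simplex. -/
lemma sum_mul_exp_vertexLoss_sub_le {d : ℕ} {p : Fin d → ℝ} (hp : p ∈ probSimplex d)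
    (ξ : Fin d → ℝ) :
    ∑ i, p i * Real.exp (vertexLoss i p - vertexLoss i ξ) ≤ 1 := by
  have h := hoeffding_simplex hp (fun i => ξ i - p i)
  have h1 : ∑ k, (ξ k - p k) ^ 2 = ∑ k, ξ k ^ 2 - ∑ k, p k ^ 2 - 2 * ∑ k, p k * (ξ k - p k) := by
    rw [Finset.mul_sum, ← Finset.sum_sub_distrib, ← Finset.sum_sub_distrib]
    exact Finset.sum_congr rfl fun i _ => by ring
  have h2 : ∀ i, Real.exp (vertexLoss i p - vertexLoss i ξ)
      = Real.exp (2 * (ξ i - p i - ∑ k, p k * (ξ k - p k)))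
        * Real.exp (-∑ k, (ξ k - p k) ^ 2) := by
    intro i
    rw [← Real.exp_add]
    congr 1
    rw [h1]; unfold vertexLoss; ring
  simp_rw [h2, ← mul_assoc]
  rw [← Finset.sum_mul, Real.exp_neg, ← div_eq_mul_inv, div_le_one (Real.exp_pos _)]
  exact h

lemma isCompact_probSimplex (d : ℕ) : IsCompact (probSimplex d) :=
  isCompact_stdSimplex ℝ (Fin d)

lemma convex_probSimplex (d : ℕ) : Convex ℝ (probSimplex d) :=
  convex_stdSimplex ℝ (Fin d)

lemma single_mem_probSimplex {d : ℕ} (i : Fin d) : Pi.single i 1 ∈ probSimplex d :=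
  single_mem_stdSimplex ℝ i

/-- Minimax step: if no mixture of outcomes shows the target losses `g` to be unattainable, then
some prediction attains all of them. The prediction minimises the convex function
`p ↦ ∑ p_i² + ∑ p_i g_i` on the simplex, and the claim is the first-order optimality condition in
the direction of the vertex `i`. -/
lemma exists_vertexLoss_le {d : ℕ} (hd : 0 < d) (g : Fin d → ℝ)
    (hg : ∀ p ∈ probSimplex d, 1 - ∑ i, p i ^ 2 ≤ ∑ i, p i * g i) :
    ∃ γ ∈ probSimplex d, ∀ i, vertexLoss i γ ≤ g i := by
  have hcont : Continuous fun p : Fin d → ℝ => ∑ i, p i ^ 2 + ∑ i, p i * g i := by fun_prop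
  obtain ⟨p, hp, hmin⟩ := (isCompact_probSimplex d).exists_isMinOn
    ⟨_, single_mem_probSimplex ⟨0, hd⟩⟩ hcont.continuousOn
  refine ⟨p, hp, fun i => ?_⟩
  set q : Fin d → ℝ := Pi.single i 1 with hq
  set A : ℝ := 2 * ∑ k, p k * (q k - p k) + ∑ k, (q k - p k) * g k with hA
  set B : ℝ := ∑ k, (q k - p k) ^ 2 with hB
  have hB0 : 0 ≤ B := Finset.sum_nonneg fun k _ => sq_nonneg _
  have hvar : ∀ s : ℝ, 0 ≤ s → s ≤ 1 → 0 ≤ s * (A + s * B) := by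
    intro s hs0 hs1
    have hmem : (1 - s) • p + s • q ∈ probSimplex d :=
      convex_probSimplex d hp (single_mem_probSimplex i) (by linarith) hs0 (by ring)
    have h : ∑ k, p k ^ 2 + ∑ k, p k * g k ≤
        ∑ k, ((1 - s) • p + s • q) k ^ 2 + ∑ k, ((1 - s) • p + s • q) k * g k := hmin hmem
    have h2 : ∑ k, ((1 - s) • p + s • q) k ^ 2 + ∑ k, ((1 - s) • p + s • q) k * g k
        = ∑ k, p k ^ 2 + ∑ k, p k * g k + s * (A + s * B) := by
      rw [hA, hB]
      simp only [Finset.mul_sum, ← Finset.sum_add_distrib]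
      refine Finset.sum_congr rfl fun k _ => ?_
      simp only [Pi.add_apply, Pi.smul_apply, smul_eq_mul]
      ring
    linarith
  have hA0 : 0 ≤ A := by
    by_contra! hneg
    -- the step length at which `A + s * B` is negative
    have hBA : 0 < B - A := by linarith
    have h := hvar (-A / (B - A)) (div_nonneg (by linarith) hBA.le)
      ((div_le_one hBA).mpr (by linarith))
    have h2 : -A / (B - A) * (A + -A / (B - A) * B) = A ^ 3 / (B - A) ^ 2 := by
      field_simp; ring
    rw [h2] at h
    have : A ^ 3 / (B - A) ^ 2 < 0 :=
      div_neg_of_neg_of_pos (by nlinarith [mul_pos_of_neg_of_neg hneg hneg]) (by positivity)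
    linarith
  have e1 : ∑ k, p k * (q k - p k) = p i - ∑ k, p k ^ 2 := by
    simp only [mul_sub, Finset.sum_sub_distrib, hq, Pi.single_apply, mul_ite, mul_one, mul_zero,
      Finset.sum_ite_eq', Finset.mem_univ, if_true, pow_two]
  have e2 : ∑ k, (q k - p k) * g k = g i - ∑ k, p k * g k := by
    simp only [sub_mul, Finset.sum_sub_distrib, hq, Pi.single_apply, ite_mul, one_mul, zero_mul,
      Finset.sum_ite_eq', Finset.mem_univ, if_true]
  have := hg p hp
  rw [hA, e1, e2] at hA0
  unfold vertexLoss
  linarith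

/-- Finite Jensen inequality for the exponential. -/
lemma exp_sum_le {d : ℕ} {p : Fin d → ℝ} (hp : p ∈ probSimplex d) (h : Fin d → ℝ) :
    Real.exp (∑ i, p i * h i) ≤ ∑ i, p i * Real.exp (h i) := by
  have := convexOn_exp.map_sum_le (t := Finset.univ) (w := p) (p := h) (fun i _ => hp.1 i) hp.2
    (fun i _ => Set.mem_univ _)
  simpa using this

/-- Mixability of the Brier game with learning rate one: for any weights `w` on a family `ξ` of
expert predictions there is one prediction in the simplex whose exponentiated negative loss
dominates the weighted average of those of the experts, for all outcomes in the simplex. -/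
lemma exists_mixture {Ω : Type*} [MeasurableSpace Ω] (μ : Measure Ω) {d : ℕ} (hd : 0 < d)
    (w : Ω → ℝ) (ξ : Ω → Fin d → ℝ) (hZ : 0 < ∫ ω, w ω ∂μ)
    (hw : ∀ ω, 0 ≤ w ω) (hwi : Integrable w μ)
    (hi : ∀ i, Integrable (fun ω => w ω * Real.exp (-vertexLoss i (ξ ω))) μ)
    (hpos : ∀ i, 0 < ∫ ω, w ω * Real.exp (-vertexLoss i (ξ ω)) ∂μ) :
    ∃ γ ∈ probSimplex d, ∀ y ∈ probSimplex d,
      ∫ ω, w ω * Real.exp (-brier y (ξ ω)) ∂μ ≤ Real.exp (-brier y γ) * ∫ ω, w ω ∂μ := by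
  set Z := ∫ ω, w ω ∂μ with hZdef
  set E : Fin d → ℝ := fun i => ∫ ω, w ω * Real.exp (-vertexLoss i (ξ ω)) ∂μ with hE
  have hpos' : ∀ i, 0 < E i := hpos
  obtain ⟨γ, hγ, hle⟩ := exists_vertexLoss_le hd (fun i => -Real.log (E i / Z)) (by
    intro p hp
    have hJ := exp_sum_le hp fun i => Real.log (E i / Z) + vertexLoss i p
    have hle1 : ∑ i, p i * Real.exp (Real.log (E i / Z) + vertexLoss i p) ≤ 1 := by
      have e : ∀ i, p i * Real.exp (Real.log (E i / Z) + vertexLoss i p)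
          = (∫ ω, w ω * (p i * Real.exp (vertexLoss i p - vertexLoss i (ξ ω))) ∂μ) / Z := by
        intro i
        rw [Real.exp_add, Real.exp_log (div_pos (hpos' i) hZ)]
        have : ∀ ω, w ω * (p i * Real.exp (vertexLoss i p - vertexLoss i (ξ ω)))
            = p i * Real.exp (vertexLoss i p) * (w ω * Real.exp (-vertexLoss i (ξ ω))) := by
          intro ω
          rw [sub_eq_add_neg, Real.exp_add]; ring
        simp_rw [this]
        rw [integral_const_mul]
        simp only [hE]; ring
      have hint : ∀ i, Integrable
          (fun ω => w ω * (p i * Real.exp (vertexLoss i p - vertexLoss i (ξ ω)))) μ := by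
        intro i
        refine ((hi i).const_mul (p i * Real.exp (vertexLoss i p))).congr
          (Filter.Eventually.of_forall fun ω => ?_)
        simp only
        rw [sub_eq_add_neg, Real.exp_add]; ring
      simp_rw [e]
      rw [← Finset.sum_div, div_le_one hZ, ← integral_finsetSum _ fun i _ => hint i]
      refine integral_mono (integrable_finsetSum _ fun i _ => hint i) hwi fun ω => ?_
      simp only
      rw [← Finset.mul_sum]
      exact mul_le_of_le_one_right (hw ω) (sum_mul_exp_vertexLoss_sub_le hp (ξ ω))
    have h0 := Real.exp_le_one_iff.mp (hJ.trans hle1)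
    simp only [mul_add, Finset.sum_add_distrib, sum_mul_vertexLoss_self hp] at h0
    simp only [mul_neg, Finset.sum_neg_distrib]
    linarith)
  refine ⟨γ, hγ, fun y hy => ?_⟩
  -- bound the exponential of an average over outcomes by the average of normalised exponentials
  have hb : ∀ ω, w ω * Real.exp (-brier y (ξ ω)) ≤ Real.exp (-brier y γ) *
      ∑ i, y i * (Real.exp (vertexLoss i γ) * (w ω * Real.exp (-vertexLoss i (ξ ω)))) := by
    intro ω
    have hJ := exp_sum_le hy fun i => vertexLoss i γ - vertexLoss i (ξ ω)
    have e1 : Real.exp (-brier y (ξ ω)) = Real.exp (-brier y γ) *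
        Real.exp (∑ i, y i * (vertexLoss i γ - vertexLoss i (ξ ω))) := by
      rw [← Real.exp_add, brier_eq hy, brier_eq hy]
      simp only [mul_sub, Finset.sum_sub_distrib]
      congr 1; ring
    have e2 : ∑ i, y i * (Real.exp (vertexLoss i γ) * (w ω * Real.exp (-vertexLoss i (ξ ω))))
        = w ω * ∑ i, y i * Real.exp (vertexLoss i γ - vertexLoss i (ξ ω)) := by
      rw [Finset.mul_sum]
      refine Finset.sum_congr rfl fun i _ => ?_
      rw [sub_eq_add_neg, Real.exp_add]; ring
    rw [e1, e2, mul_left_comm]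
    exact mul_le_mul_of_nonneg_left (mul_le_mul_of_nonneg_left hJ (hw ω)) (Real.exp_pos _).le
  have hint : ∀ i, Integrable
      (fun ω => y i * (Real.exp (vertexLoss i γ) * (w ω * Real.exp (-vertexLoss i (ξ ω))))) μ :=
    fun i => ((hi i).const_mul _).const_mul _
  calc ∫ ω, w ω * Real.exp (-brier y (ξ ω)) ∂μ
      ≤ ∫ ω, Real.exp (-brier y γ) *
          ∑ i, y i * (Real.exp (vertexLoss i γ) * (w ω * Real.exp (-vertexLoss i (ξ ω)))) ∂μ :=
        integral_mono_of_nonneg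
          (Filter.Eventually.of_forall fun ω => mul_nonneg (hw ω) (Real.exp_pos _).le)
          ((integrable_finsetSum _ fun i _ => hint i).const_mul _)
          (Filter.Eventually.of_forall hb)
    _ = Real.exp (-brier y γ) * ∑ i, y i * (Real.exp (vertexLoss i γ) * E i) := by
        rw [integral_const_mul, integral_finsetSum _ fun i _ => hint i]
        simp only [integral_const_mul, hE]
    _ ≤ Real.exp (-brier y γ) * ∑ i, y i * Z := by
        gcongr with i _
        · exact hy.1 i
        · have h := Real.exp_le_exp.mpr (hle i)
          rw [Real.exp_neg, Real.exp_log (div_pos (hpos' i) hZ), inv_div,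
            le_div_iff₀ (hpos' i)] at h
          exact h
    _ = Real.exp (-brier y γ) * Z := by rw [← Finset.sum_mul, hy.2, one_mul]

/-! ### Gaussian integrals -/

section Gaussian

variable {ι : Type*} [Fintype ι]

lemma integrable_gaussian_pi {b : ℝ} (hb : 0 < b) :
    Integrable fun u : ι → ℝ => Real.exp (-b * ∑ k, u k ^ 2) := by
  simp_rw [Finset.mul_sum, Real.exp_sum]
  exact Integrable.fintype_prod (f := fun (_ : ι) (s : ℝ) => Real.exp (-b * s ^ 2))
    fun _ => integrable_exp_neg_mul_sq hb

lemma integral_gaussian_pi (b : ℝ) :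
    ∫ u : ι → ℝ, Real.exp (-b * ∑ k, u k ^ 2) = √(Real.pi / b) ^ Fintype.card ι := by
  simp_rw [Finset.mul_sum, Real.exp_sum]
  rw [integral_fintype_prod_volume_eq_pow (fun s : ℝ => Real.exp (-b * s ^ 2)), integral_gaussian]

/-- Functions of quadratic growth are integrable against a Gaussian, since
`1 + s ≤ (1 + 2 / b) * exp (b s / 2)` for `s ≥ 0`. -/
lemma integrable_gaussian_mul {b : ℝ} (hb : 0 < b) {f : (ι → ℝ) → ℝ} (hf : Continuous f)
    (hle : ∀ u, |f u| ≤ 1 + ∑ k, u k ^ 2) :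
    Integrable fun u : ι → ℝ => Real.exp (-b * ∑ k, u k ^ 2) * f u := by
  refine Integrable.mono' ((integrable_gaussian_pi (ι := ι) (half_pos hb)).const_mul
    (1 + 2 / b)) (by fun_prop) (Filter.Eventually.of_forall fun u => ?_)
  set s := ∑ k, u k ^ 2 with hs
  have hs0 : 0 ≤ s := Finset.sum_nonneg fun k _ => sq_nonneg _
  rw [norm_mul, Real.norm_eq_abs, Real.norm_eq_abs, abs_of_pos (Real.exp_pos _)]
  have h1 : b / 2 * s + 1 ≤ Real.exp (b / 2 * s) := Real.add_one_le_exp _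
  have h2 : 1 + s ≤ (1 + 2 / b) * Real.exp (b / 2 * s) := by
    refine le_trans ?_ (mul_le_mul_of_nonneg_left h1 (by positivity))
    have : (1 + 2 / b) * (b / 2 * s + 1) = 1 + s + b / 2 * s + 2 / b := by field_simp; ring
    rw [this]
    have : 0 ≤ b / 2 * s := by positivity
    have : 0 ≤ 2 / b := by positivity
    linarith
  calc Real.exp (-b * s) * |f u| ≤ Real.exp (-b * s) * ((1 + 2 / b) * Real.exp (b / 2 * s)) :=
        mul_le_mul_of_nonneg_left ((hle u).trans h2) (Real.exp_pos _).le
    _ = (1 + 2 / b) * Real.exp (-(b / 2) * s) := by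
        rw [mul_left_comm, ← Real.exp_add]; congr 2; ring

/-- A function which is odd in one coordinate has zero integral. -/
lemma integral_eq_zero_of_odd [DecidableEq ι] (k : ι) (f : (ι → ℝ) → ℝ)
    (hf : ∀ u, f (fun i => if i = k then -u i else u i) = -f u) : ∫ u, f u = 0 := by
  set F : (ι → ℝ) → ι → ℝ := fun u i => if i = k then -u i else u i with hF
  have hinv : Function.Involutive F := by
    intro u; ext i; by_cases h : i = k <;> simp [hF, h]
  have hmp : MeasurePreserving F := by
    have h := volume_preserving_pi
      (f := fun (i : ι) (s : ℝ) => if i = k then -s else s) fun i => by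
        split_ifs
        · exact Measure.measurePreserving_neg _
        · exact MeasurePreserving.id _
    exact h
  have h := hmp.integral_comp
    (MeasurableEquiv.ofInvolutive F hinv hmp.measurable).measurableEmbedding f
  have h2 : ∀ u, f (F u) = -f u := hf
  simp_rw [h2] at h
  rw [integral_neg] at h
  linarith

/-- Under a centred isotropic Gaussian, linear terms and off-diagonal quadratic terms have mean
zero, so only the sign of the diagonal of the quadratic form matters. -/
lemma integral_gaussian_le_integral_mul_quadratic [DecidableEq ι] {b : ℝ} (hb : 0 < b)
    (M : ι → ι → ℝ) (l : ι → ℝ) (hM : ∀ k, 0 ≤ M k k) :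
    Integrable (fun u : ι → ℝ => Real.exp (-b * ∑ k, u k ^ 2) *
      (1 + ∑ k, ∑ m, M k m * (u k * u m) + ∑ k, l k * u k)) ∧
    ∫ u : ι → ℝ, Real.exp (-b * ∑ k, u k ^ 2) ≤
      ∫ u : ι → ℝ, Real.exp (-b * ∑ k, u k ^ 2) *
        (1 + ∑ k, ∑ m, M k m * (u k * u m) + ∑ k, l k * u k) := by
  have hsq : ∀ (u : ι → ℝ) k, u k ^ 2 ≤ ∑ k, u k ^ 2 := fun u k =>
    Finset.single_le_sum (f := fun k => u k ^ 2) (fun k _ => sq_nonneg _) (Finset.mem_univ k)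
  have i0 := integrable_gaussian_pi (ι := ι) hb
  have i1 : ∀ k, Integrable fun u : ι → ℝ => Real.exp (-b * ∑ k, u k ^ 2) * u k := fun k =>
    integrable_gaussian_mul hb (by fun_prop) fun u => by
      rw [abs_le]; constructor <;> nlinarith [hsq u k, sq_nonneg (u k - 1), sq_nonneg (u k + 1)]
  have i2 : ∀ k m, Integrable fun u : ι → ℝ =>
      Real.exp (-b * ∑ k, u k ^ 2) * (u k * u m) := fun k m =>
    integrable_gaussian_mul hb (by fun_prop) fun u => by
      rw [abs_le]
      constructor <;>
        nlinarith [hsq u k, hsq u m, sq_nonneg (u k - u m), sq_nonneg (u k + u m)]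
  have hflip : ∀ (k : ι) (u : ι → ℝ),
      ∑ i, (if i = k then -u i else u i) ^ 2 = ∑ i, u i ^ 2 := fun k u =>
    Finset.sum_congr rfl fun i _ => by split_ifs <;> ring
  have z1 : ∀ k, ∫ u : ι → ℝ, Real.exp (-b * ∑ k, u k ^ 2) * u k = 0 := fun k =>
    integral_eq_zero_of_odd k _ fun u => by rw [hflip]; simp
  have z2 : ∀ k m, 0 ≤ M k m * ∫ u : ι → ℝ, Real.exp (-b * ∑ k, u k ^ 2) * (u k * u m) := by
    intro k m
    by_cases h : k = m
    · subst h
      exact mul_nonneg (hM k) (integral_nonneg fun u =>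
        mul_nonneg (Real.exp_pos _).le (mul_self_nonneg _))
    · rw [integral_eq_zero_of_odd k, mul_zero]
      intro u
      simp only [hflip, if_true, if_neg (Ne.symm h)]
      ring
  have e : (fun u : ι → ℝ => Real.exp (-b * ∑ k, u k ^ 2) *
      (1 + ∑ k, ∑ m, M k m * (u k * u m) + ∑ k, l k * u k)) = fun u =>
      Real.exp (-b * ∑ k, u k ^ 2)
        + ∑ k, ∑ m, M k m * (Real.exp (-b * ∑ k, u k ^ 2) * (u k * u m))
        + ∑ k, l k * (Real.exp (-b * ∑ k, u k ^ 2) * u k) := by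
    ext u
    simp only [mul_add, mul_one, Finset.mul_sum, mul_left_comm]
  have j1 : Integrable fun u : ι → ℝ =>
      ∑ k, l k * (Real.exp (-b * ∑ k, u k ^ 2) * u k) :=
    integrable_finsetSum _ fun k _ => (i1 k).const_mul _
  have j2' : ∀ k, Integrable fun u : ι → ℝ =>
      ∑ m, M k m * (Real.exp (-b * ∑ k, u k ^ 2) * (u k * u m)) := fun k =>
    integrable_finsetSum _ fun m _ => (i2 k m).const_mul _
  have j2 : Integrable fun u : ι → ℝ =>
      ∑ k, ∑ m, M k m * (Real.exp (-b * ∑ k, u k ^ 2) * (u k * u m)) :=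
    integrable_finsetSum _ fun k _ => j2' k
  rw [e]
  refine ⟨(i0.add j2).add j1, ?_⟩
  have s1 := integral_add (i0.add j2) j1
  simp only [Pi.add_apply] at s1
  rw [s1, integral_add i0 j2,
    integral_finsetSum _ fun k _ => (i1 k).const_mul _, integral_finsetSum _ fun k _ => j2' k]
  simp_rw [integral_finsetSum _ fun m _ => (i2 _ m).const_mul _, integral_const_mul, z1]
  have := Finset.sum_nonneg fun k (_ : k ∈ Finset.univ) =>
    Finset.sum_nonneg fun m (_ : m ∈ Finset.univ) => z2 k m
  simp only [mul_zero, Finset.sum_const_zero, add_zero]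
  linarith

/-- Lower bound for the exponential weight of a regularised least squares functional. After
translating the centre to `v`, the integrand is compared with the isotropic Gaussian of parameter
`A + B` through `1 + x ≤ exp x`. It plays the role of the Hadamard bound
`det (A + CᵀC) ≤ (A + B) ^ card ι`, and `v` need not be the minimiser. -/
lemma exp_neg_mul_le_integral_exp_neg_leastSquares [DecidableEq ι] {τ : Type*} [Fintype τ]
    {A B : ℝ} (hA : 0 < A) (hB : 0 ≤ B) (c : τ → ℝ) (C : τ → ι → ℝ)
    (hC : ∀ k, ∑ s, C s k ^ 2 ≤ B) (v : ι → ℝ) :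
    Real.exp (-(A * ∑ k, v k ^ 2 + ∑ s, (c s + ∑ k, C s k * v k) ^ 2))
        * √(Real.pi / (A + B)) ^ Fintype.card ι ≤
      ∫ u : ι → ℝ, Real.exp (-(A * ∑ k, u k ^ 2 + ∑ s, (c s + ∑ k, C s k * u k) ^ 2)) := by
  set W : (ι → ℝ) → ℝ := fun u => A * ∑ k, u k ^ 2 + ∑ s, (c s + ∑ k, C s k * u k) ^ 2 with hW
  set M : ι → ι → ℝ := fun k m => (if k = m then B else 0) - ∑ s, C s k * C s m with hM
  set l : ι → ℝ := fun k => -(2 * A * v k + 2 * ∑ s, (c s + ∑ m, C s m * v m) * C s k) with hl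
  have hAB : 0 < A + B := by linarith
  obtain ⟨hint, hle⟩ := integral_gaussian_le_integral_mul_quadratic hAB M l (fun k => by
    simp only [hM, if_true, ← pow_two]
    linarith [hC k])
  have hWint : Integrable fun u => Real.exp (-W u) := by
    refine (integrable_gaussian_pi (ι := ι) hA).mono' (by fun_prop)
      (Filter.Eventually.of_forall fun u => ?_)
    rw [Real.norm_eq_abs, abs_of_pos (Real.exp_pos _), Real.exp_le_exp]
    have : 0 ≤ ∑ s, (c s + ∑ k, C s k * u k) ^ 2 := Finset.sum_nonneg fun s _ => sq_nonneg _
    simp only [hW]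
    linarith
  have hexpand : ∀ u, -W (v + u) = -W v + (-(A + B) * ∑ k, u k ^ 2)
      + (∑ k, ∑ m, M k m * (u k * u m) + ∑ k, l k * u k) := by
    intro u
    have q1 : ∑ k, ∑ m, M k m * (u k * u m)
        = B * ∑ k, u k ^ 2 - ∑ s, (∑ k, C s k * u k) ^ 2 := by
      have : ∀ s, (∑ k, C s k * u k) ^ 2 = ∑ k, ∑ m, C s k * C s m * (u k * u m) := by
        intro s
        rw [pow_two, Finset.sum_mul_sum]
        exact Finset.sum_congr rfl fun k _ => Finset.sum_congr rfl fun m _ => by ring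
      simp_rw [this]
      rw [Finset.sum_comm (s := (Finset.univ : Finset τ))]
      simp_rw [Finset.sum_comm (s := (Finset.univ : Finset τ))]
      simp only [hM, sub_mul, Finset.sum_sub_distrib, ite_mul, zero_mul, Finset.sum_ite_eq,
        Finset.mem_univ, if_true, Finset.sum_mul, Finset.mul_sum, pow_two]
    have q2 : ∑ k, l k * u k = -(2 * A * ∑ k, v k * u k)
        - 2 * ∑ s, (c s + ∑ m, C s m * v m) * ∑ k, C s k * u k := by
      have : ∑ s, (c s + ∑ m, C s m * v m) * ∑ k, C s k * u k
          = ∑ k, (∑ s, (c s + ∑ m, C s m * v m) * C s k) * u k := by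
        simp_rw [Finset.mul_sum, Finset.sum_mul]
        rw [Finset.sum_comm]
        exact Finset.sum_congr rfl fun k _ => Finset.sum_congr rfl fun m _ => by ring
      rw [this]
      simp only [Finset.mul_sum]
      rw [← Finset.sum_neg_distrib, ← Finset.sum_sub_distrib]
      refine Finset.sum_congr rfl fun k _ => ?_
      simp only [hl]
      ring
    have q3 : ∑ k, (v + u) k ^ 2 = ∑ k, v k ^ 2 + 2 * ∑ k, v k * u k + ∑ k, u k ^ 2 := by
      rw [Finset.mul_sum, ← Finset.sum_add_distrib, ← Finset.sum_add_distrib]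
      exact Finset.sum_congr rfl fun k _ => by simp only [Pi.add_apply]; ring
    have q4 : ∑ s, (c s + ∑ k, C s k * (v + u) k) ^ 2 = ∑ s, (c s + ∑ k, C s k * v k) ^ 2
        + 2 * ∑ s, (c s + ∑ m, C s m * v m) * ∑ k, C s k * u k
        + ∑ s, (∑ k, C s k * u k) ^ 2 := by
      rw [Finset.mul_sum, ← Finset.sum_add_distrib, ← Finset.sum_add_distrib]
      refine Finset.sum_congr rfl fun s _ => ?_
      simp only [Pi.add_apply, mul_add, Finset.sum_add_distrib]
      ring
    simp only [hW]
    rw [q1, q2, q3, q4]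
    ring
  change Real.exp (-W v) * _ ≤ ∫ u, Real.exp (-W u)
  rw [← integral_add_left_eq_self (fun u => Real.exp (-W u)) v, ← integral_gaussian_pi (A + B)]
  refine (mul_le_mul_of_nonneg_left hle (Real.exp_pos _).le).trans ?_
  rw [← integral_const_mul]
  refine integral_mono (hint.const_mul _) (hWint.comp_add_left v) fun u => ?_
  simp only
  rw [hexpand u, Real.exp_add, Real.exp_add, mul_assoc]
  gcongr
  rw [add_assoc, add_comm 1]
  exact Real.add_one_le_exp _

end Gaussian

/-! ### Linear experts and the aggregating strategy -/

/-- The coefficient of the parameter `α k.1 k.2` in the `i`-th component of the expert prediction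
`expertPred n d α x`, which is an affine function of `α`. -/
def expertCoeff (n d : ℕ) (x : Fin n → ℝ) (i : Fin d) (k : Fin (d - 1) × Fin n) : ℝ :=
  if (i : ℕ) < d - 1 then (if (i : ℕ) = k.1 then x k.2 else 0) else -x k.2

lemma expertPred_eq (n d : ℕ) (α : Fin (d - 1) → Fin n → ℝ) (x : Fin n → ℝ) (i : Fin d) :
    expertPred n d α x i
      = expertPred n d 0 x i + ∑ k, expertCoeff n d x i k * α k.1 k.2 := by
  rw [Fintype.sum_prod_type]
  unfold expertPred expertCoeff
  split_ifs with h
  · have : ∀ a : Fin (d - 1), (i : ℕ) = a ↔ a = ⟨i, h⟩ := fun a => by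
      rw [Fin.ext_iff]; exact eq_comm
    simp only [this, ite_mul, zero_mul]
    rw [Finset.sum_eq_single (⟨i, h⟩ : Fin (d - 1))]
    · simp [mul_comm]
    · intro b _ hb; simp [hb]
    · simp
  · simp only [Pi.zero_apply, zero_mul, Finset.sum_const_zero, add_zero, Finset.sum_add_distrib,
      neg_mul, Finset.sum_neg_distrib]
    have : ∑ a, ∑ j, x j * α a j = ∑ a, ∑ j, α a j * x j :=
      Finset.sum_congr rfl fun a _ => Finset.sum_congr rfl fun j _ => mul_comm _ _
    rw [this]
    ring

/-- Each parameter enters one of the first `d - 1` components, and the last one with the opposite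
sign. The resulting factor two cancels against the regularisation `2 * a` in the logarithmic
term. -/
lemma sum_expertCoeff_sq (n d : ℕ) (x : Fin n → ℝ) (k : Fin (d - 1) × Fin n) :
    ∑ i, expertCoeff n d x i k ^ 2 = 2 * x k.2 ^ 2 := by
  obtain ⟨m, rfl⟩ : ∃ m, d = m + 1 := ⟨d - 1, by have := k.1.isLt; omega⟩
  obtain ⟨k1, k2⟩ := k
  change Fin m at k1
  rw [Fin.sum_univ_castSucc, Finset.sum_eq_single k1]
  · simp [expertCoeff]; ring
  · intro b _ hb
    have : (b : ℕ) ≠ k1 := fun h => hb (Fin.ext h)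
    simp [expertCoeff, this]
  · simp

/-- Total Brier loss of the expert with parameters `u` on a list of signals and outcomes. The
parameters are indexed by pairs, so that they range over a single finite product of copies of `ℝ`
carrying Lebesgue measure. -/
def histLoss (n d : ℕ) (hist : List ((Fin n → ℝ) × (Fin d → ℝ)))
    (u : Fin (d - 1) × Fin n → ℝ) : ℝ :=
  (hist.map fun p => brier p.2 (expertPred n d (fun i j => u (i, j)) p.1)).sum

/-- Unnormalised posterior weight of the expert `u`: a Gaussian prior density times the exponential
of minus the loss so far. -/
def weight (n d : ℕ) (a : ℝ) (hist : List ((Fin n → ℝ) × (Fin d → ℝ)))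
    (u : Fin (d - 1) × Fin n → ℝ) : ℝ :=
  Real.exp (-(2 * a * ∑ k, u k ^ 2 + histLoss n d hist u))

lemma brier_nonneg {d : ℕ} (y γ : Fin d → ℝ) : 0 ≤ brier y γ :=
  Finset.sum_nonneg fun _ _ => sq_nonneg _

lemma vertexLoss_nonneg {d : ℕ} (i : Fin d) (γ : Fin d → ℝ) : 0 ≤ vertexLoss i γ := by
  have := Finset.single_le_sum (f := fun k => γ k ^ 2) (fun k _ => sq_nonneg _)
    (Finset.mem_univ i)
  unfold vertexLoss
  nlinarith [sq_nonneg (γ i - 1)]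

lemma continuous_expertPred (n d : ℕ) (x : Fin n → ℝ) :
    Continuous fun u : Fin (d - 1) × Fin n → ℝ => expertPred n d (fun i j => u (i, j)) x := by
  refine continuous_pi fun i => ?_
  rw [funext fun u : Fin (d - 1) × Fin n → ℝ => expertPred_eq n d (fun i j => u (i, j)) x i]
  fun_prop

lemma continuous_histLoss (n d : ℕ) (hist : List ((Fin n → ℝ) × (Fin d → ℝ))) :
    Continuous (histLoss n d hist) := by
  refine continuous_list_sum _ fun p _ => ?_
  have := continuous_expertPred n d p.1
  unfold brier
  fun_prop

lemma histLoss_nonneg (n d : ℕ) (hist : List ((Fin n → ℝ) × (Fin d → ℝ)))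
    (u : Fin (d - 1) × Fin n → ℝ) : 0 ≤ histLoss n d hist u := by
  refine List.sum_nonneg fun r hr => ?_
  obtain ⟨p, -, rfl⟩ := List.mem_map.mp hr
  exact brier_nonneg _ _

lemma integrable_exp_neg_reg (n d : ℕ) {a : ℝ} (ha : 0 < a) {f : (Fin (d - 1) × Fin n → ℝ) → ℝ}
    (hf : Continuous f) (h0 : ∀ u, 0 ≤ f u) :
    Integrable fun u => Real.exp (-(2 * a * ∑ k, u k ^ 2 + f u)) := by
  refine (integrable_gaussian_pi (b := 2 * a) (by positivity)).mono' (by fun_prop)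
    (Filter.Eventually.of_forall fun u => ?_)
  rw [Real.norm_eq_abs, abs_of_pos (Real.exp_pos _), Real.exp_le_exp]
  linarith [h0 u]

/-- One step of the aggregating strategy: some prediction makes the total weight decrease at least
as fast as the exponential of minus the learner's loss. -/
lemma exists_step (n d : ℕ) (hd : 2 ≤ d) {a : ℝ} (ha : 0 < a)
    (hist : List ((Fin n → ℝ) × (Fin d → ℝ))) (x : Fin n → ℝ) :
    ∃ γ ∈ probSimplex d, ∀ y ∈ probSimplex d,
      ∫ u, weight n d a (hist ++ [(x, y)]) u
        ≤ Real.exp (-brier y γ) * ∫ u, weight n d a hist u := by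
  have hc := continuous_histLoss n d hist
  have h0 := histLoss_nonneg n d hist
  have hwi : Integrable (weight n d a hist) := integrable_exp_neg_reg n d ha hc h0
  have e : ∀ i, (fun u => weight n d a hist u *
      Real.exp (-vertexLoss i (expertPred n d (fun i j => u (i, j)) x))) = fun u =>
      Real.exp (-(2 * a * ∑ k, u k ^ 2 + (histLoss n d hist u +
        vertexLoss i (expertPred n d (fun i j => u (i, j)) x)))) := by
    intro i; ext u
    rw [weight, ← Real.exp_add]; congr 1; ring
  have hi : ∀ i, Integrable fun u => weight n d a hist u *
      Real.exp (-vertexLoss i (expertPred n d (fun i j => u (i, j)) x)) := by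
    intro i
    rw [e i]
    refine integrable_exp_neg_reg n d ha ?_ fun u => add_nonneg (h0 u) (vertexLoss_nonneg _ _)
    have := continuous_expertPred n d x
    unfold vertexLoss
    fun_prop
  obtain ⟨γ, hγ, h⟩ := exists_mixture volume (by omega : 0 < d) (weight n d a hist)
    (fun u => expertPred n d (fun i j => u (i, j)) x) (integral_exp_pos hwi)
    (fun u => (Real.exp_pos _).le) hwi hi (fun i => by
      have := hi i
      rw [e i] at this ⊢
      exact integral_exp_pos this)
  refine ⟨γ, hγ, fun y hy => le_of_eq_of_le ?_ (h y hy)⟩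
  congr 1; ext u
  rw [weight, weight, ← Real.exp_add, histLoss, List.map_append, List.sum_append, ← histLoss]
  congr 1
  simp only [List.map_cons, List.map_nil, List.sum_cons, List.sum_nil]
  ring

/-- Theoretical bound for mAAR(2a): there is an online strategy predicting in the
probability simplex whose cumulative Brier loss exceeds that of any linear expert α
by at most 2a‖α‖² + (n(d-1)/2)·ln(TX²/a + 1). -/
theorem mAAR_bound (n d : ℕ) (hn : 1 ≤ n) (hd : 2 ≤ d) (a : ℝ) (ha : 0 < a) :
    ∃ S : List ((Fin n → ℝ) × (Fin d → ℝ)) → (Fin n → ℝ) → (Fin d → ℝ),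
      (∀ hist x, S hist x ∈ probSimplex d) ∧
      ∀ X : ℝ, 0 < X → ∀ T : ℕ, 1 ≤ T →
        ∀ (x : ℕ → Fin n → ℝ) (y : ℕ → Fin d → ℝ),
          (∀ t < T, ∀ j, |x t j| ≤ X) →
          (∀ t < T, y t ∈ probSimplex d) →
          ∀ α : Fin (d - 1) → Fin n → ℝ,
            ∑ t ∈ Finset.range T,
                brier (y t) (S (List.ofFn fun s : Fin t => (x s, y s)) (x t))
              ≤ ∑ t ∈ Finset.range T, brier (y t) (expertPred n d α (x t))
                + 2 * a * (∑ i, ∑ j, (α i j) ^ 2)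
                + (n : ℝ) * ((d : ℝ) - 1) / 2 * Real.log ((T : ℝ) * X ^ 2 / a + 1) := by
  choose S hS hstep using exists_step n d hd ha
  refine ⟨S, hS, ?_⟩
  intro X hX T hT x y hx hy α
  set H : ℕ → List ((Fin n → ℝ) × (Fin d → ℝ)) :=
    fun t => List.ofFn fun s : Fin t => (x s, y s) with hH
  have hHsucc : ∀ t, H (t + 1) = H t ++ [(x t, y t)] := by
    intro t
    simp only [hH]
    rw [List.ofFn_succ', List.concat_eq_append]
    rfl
  set N : ℕ := Fintype.card (Fin (d - 1) × Fin n) with hN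
  have hNval : (N : ℝ) = n * ((d : ℝ) - 1) := by
    rw [hN, Fintype.card_prod, Fintype.card_fin, Fintype.card_fin, Nat.cast_mul,
      Nat.cast_sub (by omega), Nat.cast_one, mul_comm]
  -- the total weight bounds the learner's loss from above
  have hupper : ∀ t ≤ T, ∫ u, weight n d a (H t) u ≤
      Real.exp (-∑ s ∈ Finset.range t, brier (y s) (S (H s) (x s)))
        * √(Real.pi / (2 * a)) ^ N := by
    intro t
    induction t with
    | zero =>
      intro _
      rw [← integral_gaussian_pi]
      simp [weight, histLoss, hH]
    | succ t ih =>
      intro ht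
      rw [hHsucc, Finset.sum_range_succ, neg_add, add_comm, Real.exp_add, mul_assoc]
      exact (hstep (H t) (x t) (y t) (hy t ht)).trans
        (mul_le_mul_of_nonneg_left (ih (by omega)) (Real.exp_pos _).le)
  -- and is at least a multiple of the exponentiated regularised loss of any single expert
  set B : ℝ := T * (2 * X ^ 2) with hB
  have hB0 : 0 ≤ B := by positivity
  set L : ℝ := ∑ t ∈ Finset.range T, brier (y t) (expertPred n d α (x t)) with hL
  set R : ℝ := ∑ i, ∑ j, α i j ^ 2 with hR
  have hlower : Real.exp (-(2 * a * R + L)) * √(Real.pi / (2 * a + B)) ^ N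
      ≤ ∫ u, weight n d a (H T) u := by
    have hloss : ∀ u : Fin (d - 1) × Fin n → ℝ,
        ∑ t ∈ Finset.range T, brier (y t) (expertPred n d (fun i j => u (i, j)) (x t)) =
        ∑ s : Fin T × Fin d, (expertPred n d 0 (x s.1) s.2 - y s.1 s.2
          + ∑ k, expertCoeff n d (x s.1) s.2 k * u k) ^ 2 := by
      intro u
      rw [Fintype.sum_prod_type, Finset.sum_range]
      refine Finset.sum_congr rfl fun t _ => Finset.sum_congr rfl fun i _ => ?_
      rw [expertPred_eq]
      ring
    have h := exp_neg_mul_le_integral_exp_neg_leastSquares (A := 2 * a) (by positivity) hB0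
      (fun s : Fin T × Fin d => expertPred n d 0 (x s.1) s.2 - y s.1 s.2)
      (fun s k => expertCoeff n d (x s.1) s.2 k) (fun k => by
        rw [Fintype.sum_prod_type]
        simp only [sum_expertCoeff_sq]
        refine (Finset.sum_le_card_nsmul _ _ (2 * X ^ 2) fun t _ => ?_).trans_eq (by simp [hB])
        have := sq_le_sq' (abs_le.mp (hx t t.isLt k.2)).1 (abs_le.mp (hx t t.isLt k.2)).2
        linarith) (fun k => α k.1 k.2)
    simp_rw [← hloss] at h
    rw [Fintype.sum_prod_type] at h
    refine h.trans_eq ?_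
    congr 1; ext u
    rw [weight, histLoss]
    simp only [hH, List.map_ofFn, List.sum_ofFn, Function.comp_apply]
    rw [Finset.sum_range]
  have h := hlower.trans (hupper T le_rfl)
  have hp1 : 0 < Real.pi / (2 * a + B) := by positivity
  have hp2 : 0 < Real.pi / (2 * a) := by positivity
  have hlog := Real.log_le_log (by positivity) h
  rw [Real.log_mul (Real.exp_pos _).ne' (by positivity),
    Real.log_mul (Real.exp_pos _).ne' (by positivity), Real.log_exp, Real.log_exp, Real.log_pow,
    Real.log_pow, Real.log_sqrt hp1.le, Real.log_sqrt hp2.le] at hlog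
  have hquot : Real.log (T * X ^ 2 / a + 1)
      = Real.log (Real.pi / (2 * a)) - Real.log (Real.pi / (2 * a + B)) := by
    rw [← Real.log_div hp2.ne' hp1.ne']
    congr 1
    rw [hB]
    field_simp
    ring
  rw [hquot, ← hNval]
  linarith
end
end

section
/- Fix integers n ≥ 1, d ≥ 2 and a real a > 0. There exists an online prediction strategy (the component-wise algorithm cAAR followed by projection onto the simplex) whose predictions always lie in the probability simplex Δ ⊂ ℝ^d and such that for every X > 0, every positive integer T, every sequence of signals x_1, …, x_T ∈ ℝ^n with ‖x_t‖_∞ ≤ X for all t, every sequence of outcomes y_1, …, y_T ∈ Δ, and every α ∈ ℝ^{n(d−1)}: Σ_{t=1}^T λ(y_t, γ_t) ≤ Σ_{t=1}^T λ(y_t, ξ(α, x_t)) + d·a‖α‖_2² + (n d/4)·ln(T X²/a + 1), where γ_t is the strategy's prediction at step t. -/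
/-!
Each coordinate `i` is predicted separately by the Aggregating Algorithm for Regression (online
ridge regression that already counts the current signal in its Gram matrix), run on the centred
outcomes `y i - 1/d`, which lie in the interval `[-1/d, 1 - 1/d]` of length `1`. With
`A = a I + ∑ x xᵀ` and `b = ∑ y x`, the minimal regularized loss so far is `∑ y² - bᵀ A⁻¹ b`, and
in every round the loss of the learner is at most the increase of this minimum plus
`(1/4) log (det A_new / det A_old)` (`aar_step`, which rests on `scalar_step`). Telescoping gives
the one-dimensional bound `aar_regret`, and AM-GM on the eigenvalues of `A` gives
`log det A ≤ n log (a + T X²)`, where `log det A = n log a` initially (`log_det_gram_le`).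

The expert `α` acts on the centred coordinates through `α_1, …, α_{d-1}` and
`α_d = -∑ α_k`; by Cauchy-Schwarz these `d` vectors have total squared norm at most `d ‖α‖²`.
Finally, projecting onto the simplex does not increase the distance to any point of the simplex
(`exists_simplex_proj`).
-/

open Finset

noncomputable section

open Matrix

/-! ### The scalar inequality -/

/-- The per-round inequality in scalar form: `s = xᵀ A⁻¹ x`, `q = xᵀ A⁻¹ b`, `m` is the midpoint of
an interval of length `1` containing the outcome `y`, and the prediction is
`(q + m s) / (1 + s)`. -/
lemma scalar_step (s q y m : ℝ) (hs : 0 ≤ s) (hy : |y - m| ≤ 1 / 2) :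
    ((q + m * s) / (1 + s) - y) ^ 2
      ≤ y ^ 2 - (2 * y * q + y ^ 2 * s - (q + y * s) ^ 2 / (1 + s)) + 1 / 4 * Real.log (1 + s) := by
  have h1 : 0 < 1 + s := by linarith
  have hlog := Real.one_sub_inv_le_log_of_pos h1
  have hy2 : (y - m) ^ 2 ≤ 1 / 4 := by
    have := sq_le_sq' (abs_le.mp hy).1 (abs_le.mp hy).2
    linarith
  have h2 : 1 - (1 + s)⁻¹ = s / (1 + s) := by field_simp; ring
  rw [h2] at hlog
  -- once `log (1 + s)` is bounded below by `s / (1 + s)`, the slack is a square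
  -- plus the defect of the bound `(y - m)² ≤ 1/4`
  have key : y ^ 2 - (2 * y * q + y ^ 2 * s - (q + y * s) ^ 2 / (1 + s)) + 1 / 4 * (s / (1 + s))
      - ((q + m * s) / (1 + s) - y) ^ 2
      = s * (q - m) ^ 2 / (1 + s) ^ 2 + s * (1 / 4 - (y - m) ^ 2) / (1 + s) := by
    field_simp
    ring
  have p1 : 0 ≤ s * (q - m) ^ 2 / (1 + s) ^ 2 := by positivity
  have p2 : 0 ≤ s * (1 / 4 - (y - m) ^ 2) / (1 + s) :=
    div_nonneg (mul_nonneg hs (by linarith)) h1.le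
  linarith

/-! ### Rank-one updates and the one-dimensional regret bound -/

section AAR

variable {n : ℕ}

/-- Prediction of the Aggregating Algorithm for Regression with regularized Gram matrix `A` and
correlation vector `b` of the past rounds, at signal `x`, for outcomes in an interval of length `1`
with midpoint `m`. -/
def aarPred (A : Matrix (Fin n) (Fin n) ℝ) (b : Fin n → ℝ) (m : ℝ) (x : Fin n → ℝ) : ℝ :=
  (x ⬝ᵥ A⁻¹ *ᵥ b + m * (x ⬝ᵥ A⁻¹ *ᵥ x)) / (1 + x ⬝ᵥ A⁻¹ *ᵥ x)

/-- The regularized Gram matrix `a I + ∑ x_s x_sᵀ` of the first `t` signals. -/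
def regGram (a : ℝ) (x : ℕ → Fin n → ℝ) (t : ℕ) : Matrix (Fin n) (Fin n) ℝ :=
  a • (1 : Matrix (Fin n) (Fin n) ℝ) + ∑ s ∈ range t, vecMulVec (x s) (x s)

/-- The correlation vector `∑ y_s x_s` of the first `t` rounds. -/
def corr (x : ℕ → Fin n → ℝ) (y : ℕ → ℝ) (t : ℕ) : Fin n → ℝ :=
  ∑ s ∈ range t, y s • x s

lemma gram_succ (a : ℝ) (x : ℕ → Fin n → ℝ) (t : ℕ) :
    regGram a x (t + 1) = regGram a x t + vecMulVec (x t) (x t) := by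
  simp [regGram, sum_range_succ, add_assoc]

lemma corr_succ (x : ℕ → Fin n → ℝ) (y : ℕ → ℝ) (t : ℕ) :
    corr x y (t + 1) = corr x y t + y t • x t := by
  simp [corr, sum_range_succ]

lemma posDef_add_vecMulVec {A : Matrix (Fin n) (Fin n) ℝ} (hA : A.PosDef) (x : Fin n → ℝ) :
    (A + vecMulVec x x).PosDef := by
  refine hA.add_posSemidef ?_
  simpa using posSemidef_vecMulVec_self_star x

lemma gram_posDef {a : ℝ} (ha : 0 < a) (x : ℕ → Fin n → ℝ) (t : ℕ) : (regGram a x t).PosDef := by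
  induction t with
  | zero => simpa [regGram] using PosDef.one.smul ha
  | succ t ih => rw [gram_succ]; exact posDef_add_vecMulVec ih _

lemma vecMulVec_mulVec_real (u v w : Fin n → ℝ) : vecMulVec u v *ᵥ w = (v ⬝ᵥ w) • u := by
  rw [vecMulVec_mulVec]; ext i; simp [mul_comm]

lemma symm_dot {A : Matrix (Fin n) (Fin n) ℝ} (hA : A.IsHermitian) (u v : Fin n → ℝ) :
    u ⬝ᵥ A *ᵥ v = v ⬝ᵥ A *ᵥ u := by
  have hT : Aᵀ = A := by simpa [IsHermitian] using hA
  rw [dotProduct_mulVec, ← mulVec_transpose, hT, dotProduct_comm]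

lemma mulVec_inv_mulVec {A : Matrix (Fin n) (Fin n) ℝ} (hA : A.PosDef) (u : Fin n → ℝ) :
    A *ᵥ (A⁻¹ *ᵥ u) = u := by
  rw [mulVec_mulVec, mul_nonsing_inv _ ((isUnit_iff_isUnit_det _).mp hA.isUnit), one_mulVec]

lemma inv_mulVec_eq {A : Matrix (Fin n) (Fin n) ℝ} (hA : A.PosDef) {u v : Fin n → ℝ}
    (h : A *ᵥ v = u) : A⁻¹ *ᵥ u = v := by
  rw [← h, mulVec_mulVec, nonsing_inv_mul _ ((isUnit_iff_isUnit_det _).mp hA.isUnit), one_mulVec]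

lemma det_add_vecMulVec' {A : Matrix (Fin n) (Fin n) ℝ} (hA : A.PosDef) (x : Fin n → ℝ) :
    (A + vecMulVec x x).det = A.det * (1 + x ⬝ᵥ A⁻¹ *ᵥ x) := by
  have hu := (isUnit_iff_isUnit_det _).mp hA.isUnit
  have h : A + vecMulVec x x
      = A * (1 + replicateCol Unit (A⁻¹ *ᵥ x) * replicateRow Unit x) := by
    rw [← vecMulVec_eq, mul_add, mul_one, mul_vecMulVec, mulVec_inv_mulVec hA]
  rw [h, det_mul, det_one_add_replicateCol_mul_replicateRow]

lemma inv_dot_nonneg {A : Matrix (Fin n) (Fin n) ℝ} (hA : A.PosDef) (x : Fin n → ℝ) :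
    0 ≤ x ⬝ᵥ A⁻¹ *ᵥ x := by
  simpa using hA.inv.posSemidef.dotProduct_mulVec_nonneg x

/-- Sherman-Morrison for the quadratic form `bᵀ A⁻¹ b` when a round `(x, y)` is added. -/
lemma quad_update {A : Matrix (Fin n) (Fin n) ℝ} (hA : A.PosDef) (b x : Fin n → ℝ) (y : ℝ) :
    (b + y • x) ⬝ᵥ (A + vecMulVec x x)⁻¹ *ᵥ (b + y • x)
      = b ⬝ᵥ A⁻¹ *ᵥ b + (2 * y * (x ⬝ᵥ A⁻¹ *ᵥ b) + y ^ 2 * (x ⬝ᵥ A⁻¹ *ᵥ x)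
        - (x ⬝ᵥ A⁻¹ *ᵥ b + y * (x ⬝ᵥ A⁻¹ *ᵥ x)) ^ 2 / (1 + x ⬝ᵥ A⁻¹ *ᵥ x)) := by
  have hs := inv_dot_nonneg hA x
  have hsym := symm_dot hA.inv.isHermitian b x
  set s := x ⬝ᵥ A⁻¹ *ᵥ x with hsdef
  set q := x ⬝ᵥ A⁻¹ *ᵥ b with hqdef
  have h1 : 1 + s ≠ 0 := by linarith
  have hinv : (A + vecMulVec x x)⁻¹ *ᵥ (b + y • x)
      = A⁻¹ *ᵥ b + (y - (q + y * s) / (1 + s)) • (A⁻¹ *ᵥ x) := by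
    apply inv_mulVec_eq (posDef_add_vecMulVec hA x)
    rw [add_mulVec, vecMulVec_mulVec_real, mulVec_add, mulVec_smul, mulVec_inv_mulVec hA,
      mulVec_inv_mulVec hA, dotProduct_add, dotProduct_smul, ← hsdef, ← hqdef, add_assoc,
      ← add_smul]
    congr 2
    rw [smul_eq_mul]
    field_simp
    ring
  rw [hinv]
  simp only [add_dotProduct, dotProduct_add, smul_dotProduct, dotProduct_smul, smul_eq_mul, hsym,
    ← hsdef, ← hqdef]
  field_simp
  ring

/-- One round of the algorithm: the loss is at most the increase of the minimal regularized loss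
`∑ y² - bᵀ A⁻¹ b` plus a quarter of the increase of `log det A`. -/
lemma aar_step {A : Matrix (Fin n) (Fin n) ℝ} (hA : A.PosDef) (b x : Fin n → ℝ) (y m : ℝ)
    (hy : |y - m| ≤ 1 / 2) :
    (aarPred A b m x - y) ^ 2
      ≤ y ^ 2 - ((b + y • x) ⬝ᵥ (A + vecMulVec x x)⁻¹ *ᵥ (b + y • x) - b ⬝ᵥ A⁻¹ *ᵥ b)
        + 1 / 4 * (Real.log (A + vecMulVec x x).det - Real.log A.det) := by
  have hs := inv_dot_nonneg hA x
  rw [quad_update hA, det_add_vecMulVec' hA, Real.log_mul hA.det_pos.ne' (by linarith)]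
  have := scalar_step _ (x ⬝ᵥ A⁻¹ *ᵥ b) y m hs hy
  unfold aarPred
  linarith

/-- The regularized loss of `θ` as a quadratic polynomial in `θ`. -/
lemma ridge_loss_eq (a : ℝ) (x : ℕ → Fin n → ℝ) (y : ℕ → ℝ) (θ : Fin n → ℝ) (T : ℕ) :
    ∑ t ∈ range T, (θ ⬝ᵥ x t - y t) ^ 2 + a * (θ ⬝ᵥ θ)
      = ∑ t ∈ range T, y t ^ 2 - 2 * (θ ⬝ᵥ corr x y T) + θ ⬝ᵥ regGram a x T *ᵥ θ := by
  induction T with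
  | zero => simp [regGram, corr, smul_mulVec]
  | succ T ih =>
    rw [sum_range_succ, sum_range_succ, gram_succ, corr_succ, add_mulVec, vecMulVec_mulVec_real,
      dotProduct_add, dotProduct_add, dotProduct_smul, dotProduct_smul, dotProduct_comm (x T) θ]
    simp only [smul_eq_mul]
    linear_combination ih

/-- Completing the square. -/
lemma quad_min {A : Matrix (Fin n) (Fin n) ℝ} (hA : A.PosDef) (b θ : Fin n → ℝ) :
    -(b ⬝ᵥ A⁻¹ *ᵥ b) ≤ - 2 * (θ ⬝ᵥ b) + θ ⬝ᵥ A *ᵥ θ := by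
  have h := hA.posSemidef.dotProduct_mulVec_nonneg (θ - A⁻¹ *ᵥ b)
  have hsym := symm_dot hA.isHermitian (A⁻¹ *ᵥ b) θ
  simp only [star_trivial, mulVec_sub, mulVec_inv_mulVec hA, sub_dotProduct, dotProduct_sub] at h
  rw [hsym, mulVec_inv_mulVec hA, dotProduct_comm (A⁻¹ *ᵥ b) b] at h
  linarith

/-- The one-dimensional regret bound, with the log-determinant not yet estimated. -/
lemma aar_regret {a : ℝ} (ha : 0 < a) (x : ℕ → Fin n → ℝ) (y : ℕ → ℝ) (m : ℝ) (T : ℕ)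
    (hy : ∀ t < T, |y t - m| ≤ 1 / 2) (θ : Fin n → ℝ) :
    ∑ t ∈ range T, (aarPred (regGram a x t) (corr x y t) m (x t) - y t) ^ 2
      ≤ ∑ t ∈ range T, (θ ⬝ᵥ x t - y t) ^ 2 + a * (θ ⬝ᵥ θ)
        + 1 / 4 * (Real.log (regGram a x T).det - n * Real.log a) := by
  have tele : ∑ t ∈ range T, (aarPred (regGram a x t) (corr x y t) m (x t) - y t) ^ 2
      ≤ ∑ t ∈ range T, y t ^ 2 - corr x y T ⬝ᵥ (regGram a x T)⁻¹ *ᵥ corr x y T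
        + 1 / 4 * (Real.log (regGram a x T).det - n * Real.log a) := by
    induction T with
    | zero => simp [regGram, corr]
    | succ T ih =>
      have h1 := ih fun t ht => hy t (by omega)
      have h2 := aar_step (gram_posDef ha x T) (corr x y T) (x T) (y T) m (hy T (by omega))
      rw [← gram_succ, ← corr_succ] at h2
      rw [sum_range_succ, sum_range_succ]
      linarith
  have := quad_min (gram_posDef ha x T) (corr x y T) θ
  rw [ridge_loss_eq]
  linarith

/-! ### Estimate of the log-determinant -/

lemma trace_gram_le (a X : ℝ) (x : ℕ → Fin n → ℝ) (T : ℕ) (hx : ∀ t < T, ∀ j, |x t j| ≤ X) :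
    (regGram a x T).trace ≤ n * (a + T * X ^ 2) := by
  have h : ∀ t ∈ range T, x t ⬝ᵥ x t ≤ n * X ^ 2 := by
    intro t ht
    calc x t ⬝ᵥ x t = ∑ j, x t j ^ 2 := by simp [dotProduct, sq]
      _ ≤ ∑ _j : Fin n, X ^ 2 := by
        refine sum_le_sum fun j _ => ?_
        have := hx t (mem_range.mp ht) j
        exact sq_le_sq' (abs_le.mp this).1 (abs_le.mp this).2
      _ = n * X ^ 2 := by simp
  have h2 := sum_le_sum h
  simp only [sum_const, card_range, nsmul_eq_mul] at h2
  simp only [regGram, trace_add, trace_smul, trace_one, trace_sum, trace_vecMulVec, Fintype.card_fin,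
    smul_eq_mul]
  linarith

/-- AM-GM for the eigenvalues, in the form of the tangent line of `log` at `c`. -/
lemma log_det_le {A : Matrix (Fin n) (Fin n) ℝ} (hA : A.PosDef) {c : ℝ} (hc : 0 < c)
    (htr : A.trace ≤ n * c) : Real.log A.det ≤ n * Real.log c := by
  have hpos := hA.eigenvalues_pos
  have hdet := hA.isHermitian.det_eq_prod_eigenvalues
  have htr' := hA.isHermitian.trace_eq_sum_eigenvalues
  simp only [RCLike.ofReal_real_eq_id, id_eq] at hdet htr'
  rw [hdet, Real.log_prod fun i _ => (hpos i).ne']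
  have h : ∀ i ∈ univ, Real.log (hA.isHermitian.eigenvalues i)
      ≤ Real.log c + (hA.isHermitian.eigenvalues i / c - 1) := by
    intro i _
    have := Real.log_le_sub_one_of_pos (div_pos (hpos i) hc)
    rw [Real.log_div (hpos i).ne' hc.ne'] at this
    linarith
  refine (sum_le_sum h).trans ?_
  rw [sum_add_distrib, sum_sub_distrib, ← sum_div, ← htr']
  simp only [sum_const, card_univ, Fintype.card_fin, nsmul_eq_mul, mul_one]
  have : A.trace / c ≤ n := (div_le_iff₀ hc).mpr htr
  linarith

lemma log_det_gram_le {a : ℝ} (ha : 0 < a) (X : ℝ) (x : ℕ → Fin n → ℝ) (T : ℕ)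
    (hx : ∀ t < T, ∀ j, |x t j| ≤ X) :
    Real.log (regGram a x T).det - n * Real.log a ≤ n * Real.log (T * X ^ 2 / a + 1) := by
  have hc : 0 < a + T * X ^ 2 := by positivity
  have h := log_det_le (gram_posDef ha x T) hc (trace_gram_le a X x T hx)
  have h2 : T * X ^ 2 / a + 1 = (a + T * X ^ 2) / a := by field_simp; ring
  rw [h2, Real.log_div hc.ne' ha.ne']
  linarith

end AAR

/-! ### Projection onto the simplex -/

/-- Every point has a point of the simplex that is no farther from any point of the simplex. -/
lemma exists_simplex_proj (d : ℕ) (hd : 2 ≤ d) (u : Fin d → ℝ) :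
    ∃ v ∈ probSimplex d, ∀ y ∈ probSimplex d, brier y v ≤ brier y u := by
  let K : Set (EuclideanSpace ℝ (Fin d)) := {v | v.ofLp ∈ probSimplex d}
  have hne : K.Nonempty := by
    refine ⟨WithLp.toLp 2 fun _ => (d : ℝ)⁻¹, fun i => by simp, ?_⟩
    have : (d : ℝ) ≠ 0 := by positivity
    simp [this]
  have hcl : IsClosed K := by
    have : K = (⋂ i, {v : EuclideanSpace ℝ (Fin d) | 0 ≤ v.ofLp i})
        ∩ {v | ∑ i, v.ofLp i = 1} := by
      ext v; simp [K, probSimplex]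
    rw [this]
    refine (isClosed_iInter fun i => isClosed_le (by fun_prop) (by fun_prop)).inter
      (isClosed_eq (by fun_prop) (by fun_prop))
  have hconv : Convex ℝ K := by
    intro v hv w hw r s hr hs hrs
    refine ⟨fun i => ?_, ?_⟩
    · have h1 := hv.1 i
      have h2 := hw.1 i
      simp only [PiLp.add_apply, PiLp.smul_apply, smul_eq_mul]
      positivity
    · simp only [PiLp.add_apply, PiLp.smul_apply, smul_eq_mul, sum_add_distrib, ← mul_sum]
      rw [hv.2, hw.2]
      linarith
  obtain ⟨v, hv, hmin⟩ :=
    exists_norm_eq_iInf_of_complete_convex hne hcl.isComplete hconv (WithLp.toLp 2 u)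
  have hin := (norm_eq_iInf_iff_real_inner_le_zero hconv hv).mp hmin
  refine ⟨v.ofLp, hv, fun y hy => ?_⟩
  have h := hin (WithLp.toLp 2 y) hy
  simp only [PiLp.inner_apply, PiLp.sub_apply, RCLike.inner_apply, conj_trivial] at h
  -- `‖u - y‖² = ‖v - y‖² + ‖u - v‖² - 2 ⟪u - v, y - v⟫`
  have e : brier y u = brier y v.ofLp + ∑ i, (u i - v.ofLp i) ^ 2
      - 2 * ∑ i, (y i - v.ofLp i) * (u i - v.ofLp i) := by
    simp only [brier, mul_sum, ← sum_add_distrib, ← sum_sub_distrib]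
    exact sum_congr rfl fun i _ => by ring
  have : 0 ≤ ∑ i, (u i - v.ofLp i) ^ 2 := sum_nonneg fun i _ => sq_nonneg _
  linarith

/-! ### The vector-valued expert and the strategy -/

/-- Linear weights of the expert `α` in all `d` centred coordinates: `α_i` for `i < d - 1`, and
`-∑ α_k` in the last one. -/
def fullWeights {n d : ℕ} (α : Fin (d - 1) → Fin n → ℝ) (i : Fin d) : Fin n → ℝ :=
  if h : (i : ℕ) < d - 1 then α ⟨i, h⟩ else -∑ k, α k

lemma expertPred_eq_s1 {n d : ℕ} (hd : 2 ≤ d) (α : Fin (d - 1) → Fin n → ℝ) (x : Fin n → ℝ)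
    (i : Fin d) : expertPred n d α x i = 1 / d + fullWeights α i ⬝ᵥ x := by
  unfold expertPred fullWeights
  split_ifs with h
  · rfl
  · have hd0 : (d : ℝ) ≠ 0 := by positivity
    have hc : ((d - 1 : ℕ) : ℝ) = d - 1 := by push_cast [Nat.cast_sub (by omega : 1 ≤ d)]; ring
    rw [neg_dotProduct, sum_dotProduct, sum_add_distrib]
    simp only [sum_const, card_univ, Fintype.card_fin, nsmul_eq_mul, hc, dotProduct]
    field_simp
    ring

lemma sum_fullWeights_sq_le {n d : ℕ} (hd : 2 ≤ d) (α : Fin (d - 1) → Fin n → ℝ) :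
    ∑ i, fullWeights α i ⬝ᵥ fullWeights α i ≤ d * ∑ i, ∑ j, α i j ^ 2 := by
  obtain ⟨e, rfl⟩ : ∃ e, d = e + 1 := ⟨d - 1, by omega⟩
  rw [Fin.sum_univ_castSucc]
  have h1 : ∀ i : Fin e, fullWeights α i.castSucc = α i := fun i => by
    simp [fullWeights]
  have h2 : fullWeights α (Fin.last e) = -∑ k, α k := by simp [fullWeights]
  -- Cauchy-Schwarz in each coordinate
  have h3 : (-∑ k, α k) ⬝ᵥ (-∑ k, α k) ≤ e * ∑ i, ∑ j, α i j ^ 2 := by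
    rw [sum_comm, mul_sum]
    simp only [dotProduct, Pi.neg_apply, Finset.sum_apply, ← sq]
    refine sum_le_sum fun j _ => ?_
    have := sq_sum_le_card_mul_sum_sq (s := univ) (f := fun k : Fin (e + 1 - 1) => α k j)
    simpa using this
  have h4 : ∑ i : Fin e, α i ⬝ᵥ α i = ∑ i, ∑ j, α i j ^ 2 := by
    simp [dotProduct, sq]
  simp only [h1, h2]
  rw [h4]
  push_cast
  linarith

/-- The component-wise prediction before projection, as a function of the history. Outcomes are
centred at `1/d`, so they lie in an interval with midpoint `1/2 - 1/d`. -/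
def rawPred {n d : ℕ} (a : ℝ) (hist : List ((Fin n → ℝ) × (Fin d → ℝ))) (x : Fin n → ℝ) :
    Fin d → ℝ := fun i =>
  1 / d + aarPred (a • 1 + (hist.map fun p => vecMulVec p.1 p.1).sum)
    ((hist.map fun p => (p.2 i - 1 / (d : ℝ)) • p.1).sum) (1 / 2 - 1 / d) x

lemma rawPred_ofFn {n d : ℕ} (a : ℝ) (x : ℕ → Fin n → ℝ) (y : ℕ → Fin d → ℝ) (t : ℕ)
    (z : Fin n → ℝ) (i : Fin d) :
    rawPred a (List.ofFn fun s : Fin t => (x s, y s)) z i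
      = 1 / d + aarPred (regGram a x t) (corr x (fun s => y s i - 1 / d) t) (1 / 2 - 1 / d) z := by
  unfold rawPred regGram corr
  simp only [List.map_ofFn, List.sum_ofFn, Function.comp_def]
  rw [Fin.sum_univ_eq_sum_range (fun s => vecMulVec (x s) (x s)) t,
    Fin.sum_univ_eq_sum_range (fun s => (y s i - 1 / (d : ℝ)) • x s) t]

/-- Theoretical bound for the component-wise algorithm cAAR (with projection onto
the simplex): its cumulative Brier loss exceeds that of any linear expert α by at most
d·a‖α‖² + (nd/4)·ln(TX²/a + 1). -/
theorem cAAR_bound (n d : ℕ) (hn : 1 ≤ n) (hd : 2 ≤ d) (a : ℝ) (ha : 0 < a) :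
    ∃ S : List ((Fin n → ℝ) × (Fin d → ℝ)) → (Fin n → ℝ) → (Fin d → ℝ),
      (∀ hist x, S hist x ∈ probSimplex d) ∧
      ∀ X : ℝ, 0 < X → ∀ T : ℕ, 1 ≤ T →
        ∀ (x : ℕ → Fin n → ℝ) (y : ℕ → Fin d → ℝ),
          (∀ t < T, ∀ j, |x t j| ≤ X) →
          (∀ t < T, y t ∈ probSimplex d) →
          ∀ α : Fin (d - 1) → Fin n → ℝ,
            ∑ t ∈ Finset.range T,
                brier (y t) (S (List.ofFn fun s : Fin t => (x s, y s)) (x t))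
              ≤ ∑ t ∈ Finset.range T, brier (y t) (expertPred n d α (x t))
                + (d : ℝ) * a * (∑ i, ∑ j, (α i j) ^ 2)
                + (n : ℝ) * (d : ℝ) / 4 * Real.log ((T : ℝ) * X ^ 2 / a + 1) := by
  choose P hP hPle using exists_simplex_proj d hd
  refine ⟨fun hist x => P (rawPred a hist x), fun hist x => hP _, ?_⟩
  intro X hX T hT x y hx hy α
  set L := Real.log ((T : ℝ) * X ^ 2 / a + 1)
  have hcoord : ∀ i : Fin d,
      ∑ t ∈ range T, (rawPred a (List.ofFn fun s : Fin t => (x s, y s)) (x t) i - y t i) ^ 2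
        ≤ ∑ t ∈ range T, (expertPred n d α (x t) i - y t i) ^ 2
          + a * (fullWeights α i ⬝ᵥ fullWeights α i) + 1 / 4 * (n * L) := by
    intro i
    have hr := aar_regret ha x (fun s => y s i - 1 / d) (1 / 2 - 1 / d) T (fun t ht => by
      have h0 := (hy t ht).1 i
      have h1 : y t i ≤ 1 :=
        (hy t ht).2 ▸ single_le_sum (fun j _ => (hy t ht).1 j) (mem_univ i)
      rw [abs_le]
      constructor <;> linarith) (fullWeights α i)
    have hl := log_det_gram_le ha X x T hx
    have e1 : ∀ t, rawPred a (List.ofFn fun s : Fin t => (x s, y s)) (x t) i - y t i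
        = aarPred (regGram a x t) (corr x (fun s => y s i - 1 / d) t) (1 / 2 - 1 / d) (x t)
          - (y t i - 1 / d) := fun t => by rw [rawPred_ofFn]; ring
    have e2 : ∀ t, expertPred n d α (x t) i - y t i
        = fullWeights α i ⬝ᵥ x t - (y t i - 1 / d) := fun t => by rw [expertPred_eq_s1 hd]; ring
    simp only [e1, e2]
    linarith
  have hsum := sum_le_sum fun i (_ : i ∈ univ) => hcoord i
  rw [sum_add_distrib, sum_add_distrib, ← mul_sum, sum_comm,
    sum_comm (f := fun i t => (expertPred n d α (x t) i - y t i) ^ 2)] at hsum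
  simp only [sum_const, card_univ, Fintype.card_fin, nsmul_eq_mul] at hsum
  have hproj := sum_le_sum fun t (ht : t ∈ range T) =>
    hPle (rawPred a (List.ofFn fun s : Fin t => (x s, y s)) (x t)) (y t) (hy t (mem_range.mp ht))
  have hw := mul_le_mul_of_nonneg_left (sum_fullWeights_sq_le hd α) ha.le
  refine hproj.trans ?_
  simp only [brier]
  linarith
end
end

section
/- Fix an integer n ≥ 1 and reals A < B, C ∈ ℝ, a > 0. There exists an online prediction strategy producing real-valued predictions γ_t such that for every X > 0, every positive integer T, every sequence of signals x_1, …, x_T ∈ ℝ^n with ‖x_t‖_∞ ≤ X for all t, every sequence of outcomes y_1, …, y_T ∈ [A, B], and every α ∈ ℝ^n: Σ_{t=1}^T (γ_t − y_t)² ≤ Σ_{t=1}^T (C + α'x_t − y_t)² + a‖α‖_2² + (n(B−A)²/4)·ln(T X²/a + 1). -/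
/-!
The strategy is the Vovk–Azoury–Warmuth forecaster: ridge regression on the shifted outcomes
`y - C`, where the current signal is also added to the data with the midpoint `m` of `[A, B]` as
its dummy outcome. With `q = xᵀ S⁻¹ x` this is the ridge prediction averaged with `m`, with
weights `1 / (1 + q)` and `q / (1 + q)`.

By the recursive least-squares update, passing from `(S, w)` to the next state changes
`(α - w)ᵀ S (α - w)` by the loss of the expert `α` minus `e² / (1 + q)`, where `e` is the ridge
residual (`quad_step`). By convexity, the forecaster's loss is at most
`e² / (1 + q) + (q / (1 + q)) (m - y)²`, and `(m - y)² ≤ (B - A)² / 4`,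
`q / (1 + q) ≤ log (1 + q)` (`loss_step`). Since `det (S + x xᵀ) = (1 + q) det S`, the logarithms
telescope to `log det S - n log a` (`potential`), which the trace bound `tr S ≤ n (a + T X²)`
controls (`log_det_le`).
-/

open Finset

noncomputable section

open Matrix

/-- State of the forecaster: the regularised Gram matrix `a I + ∑ x xᵀ` of the past signals
and the ridge-regression weights for the past outcomes shifted by `-C`. -/
abbrev RidgeState (n : ℕ) := Matrix (Fin n) (Fin n) ℝ × (Fin n → ℝ)

/-- The quadratic form `xᵀ S⁻¹ x` of the current signal. -/
def leverage {n : ℕ} (st : RidgeState n) (x : Fin n → ℝ) : ℝ := x ⬝ᵥ (st.1⁻¹ *ᵥ x)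

/-- Recursive least-squares update: `S` gains the rank-one term `x xᵀ`, and the weights move
along `S⁻¹ x` by the residual divided by `1 + xᵀ S⁻¹ x`. -/
def ridgeStep {n : ℕ} (C : ℝ) (st : RidgeState n) (p : (Fin n → ℝ) × ℝ) : RidgeState n :=
  (st.1 + vecMulVec p.1 p.1,
    st.2 + ((p.2 - C - p.1 ⬝ᵥ st.2) / (1 + leverage st p.1)) • (st.1⁻¹ *ᵥ p.1))

/-- The state after a finite history, starting from `(a I, 0)`. -/
def ridgeState {n : ℕ} (C a : ℝ) (l : List ((Fin n → ℝ) × ℝ)) : RidgeState n :=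
  l.foldl (ridgeStep C) (a • 1, 0)

/-- The prediction for signal `x` (`m` is the midpoint of the outcome interval): the ridge
prediction shrunk towards `m`, with weights `1` and `xᵀ S⁻¹ x`. It equals the ridge prediction
obtained when the current signal is added to the data with dummy outcome `m`. -/
def ridgePredict {n : ℕ} (C m : ℝ) (st : RidgeState n) (x : Fin n → ℝ) : ℝ :=
  C + (x ⬝ᵥ st.2 + leverage st x * (m - C)) / (1 + leverage st x)

lemma posDef_step {n : ℕ} {S : Matrix (Fin n) (Fin n) ℝ} (hS : S.PosDef) (x : Fin n → ℝ) :
    (S + vecMulVec x x).PosDef := by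
  refine hS.add_posSemidef ?_
  simpa using posSemidef_vecMulVec_self_star x

lemma mulVec_inv {n : ℕ} {S : Matrix (Fin n) (Fin n) ℝ} (hS : S.PosDef) (x : Fin n → ℝ) :
    S *ᵥ (S⁻¹ *ᵥ x) = x := by
  rw [mulVec_mulVec, mul_nonsing_inv _ hS.det_pos.ne'.isUnit, one_mulVec]

lemma leverage_nonneg {n : ℕ} {st : RidgeState n} (hS : st.1.PosDef) (x : Fin n → ℝ) :
    0 ≤ leverage st x := by
  simpa [leverage] using hS.inv.posSemidef.dotProduct_mulVec_nonneg x

lemma det_step {n : ℕ} {st : RidgeState n} (hS : st.1.PosDef) (x : Fin n → ℝ) :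
    (st.1 + vecMulVec x x).det = st.1.det * (1 + leverage st x) := by
  rw [vecMulVec_eq Unit, det_add_replicateCol_mul_replicateRow hS.det_pos.ne'.isUnit]
  congr 2
  rw [leverage, dotProduct_mulVec]
  simp [Matrix.mul_apply, dotProduct, vecMul]

/-- Effect of a recursive least-squares update on the quadratic form `uᵀ S u` at
`u = α - w`: its change is the expert's loss minus a `1 / (1 + q)` fraction of the squared ridge
residual. -/
lemma quad_step {n : ℕ} {st : RidgeState n} (C : ℝ) (hS : st.1.PosDef) (x : Fin n → ℝ) (y : ℝ)
    (α : Fin n → ℝ) :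
    (α - (ridgeStep C st (x, y)).2) ⬝ᵥ
        ((ridgeStep C st (x, y)).1 *ᵥ (α - (ridgeStep C st (x, y)).2)) =
      (α - st.2) ⬝ᵥ (st.1 *ᵥ (α - st.2)) + (C + α ⬝ᵥ x - y) ^ 2
        - (y - C - x ⬝ᵥ st.2) ^ 2 / (1 + leverage st x) := by
  have hq := leverage_nonneg hS x
  obtain ⟨S, w⟩ := st
  simp only [ridgeStep]
  set q := leverage (S, w) x with hqdef
  set v := S⁻¹ *ᵥ x with hv
  set e := y - C - x ⬝ᵥ w with he
  have hSv : S *ᵥ v = x := mulVec_inv hS x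
  have hsym : Sᵀ = S := by simpa using hS.isHermitian.eq
  have hvS (u : Fin n → ℝ) : v ⬝ᵥ (S *ᵥ u) = x ⬝ᵥ u := by
    rw [dotProduct_mulVec, ← mulVec_transpose, hsym, hSv]
  have hxv : x ⬝ᵥ v = q := rfl
  rw [← sub_sub]
  set u := α - w with hu
  have hα : α ⬝ᵥ x = x ⬝ᵥ u + x ⬝ᵥ w := by
    rw [hu, dotProduct_sub, dotProduct_comm]; ring
  have hR : vecMulVec x x *ᵥ (u - (e / (1 + q)) • v)
      = (x ⬝ᵥ u - (e / (1 + q)) * q) • x := by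
    rw [vecMulVec_mulVec]; ext i
    simp [dotProduct_sub, hxv]
    ring
  have hc := dotProduct_comm u x
  have hc' := dotProduct_comm v x
  rw [add_mulVec, hR, mulVec_sub, mulVec_smul, hSv]
  simp only [sub_dotProduct, dotProduct_sub, dotProduct_add, smul_dotProduct, dotProduct_smul,
    smul_eq_mul, hvS, hxv, hc, hc', hα]
  rw [show C + (x ⬝ᵥ u + x ⬝ᵥ w) - y = x ⬝ᵥ u - e by rw [he]; ring]
  have : 1 + q ≠ 0 := by positivity
  field_simp
  ring

/-- One-round bound: by convexity of the square, the forecaster's loss is at most the weighted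
mean of the squared ridge residual and `(m - y)²`, and `q / (1 + q) ≤ log (1 + q)`. -/
lemma loss_step {A B C y q r : ℝ} (hy : y ∈ Set.Icc A B) (hq : 0 ≤ q) :
    (C + (r + q * ((A + B) / 2 - C)) / (1 + q) - y) ^ 2 ≤
      (y - C - r) ^ 2 / (1 + q) + (B - A) ^ 2 / 4 * Real.log (1 + q) := by
  obtain ⟨h1, h2⟩ := hy
  have hq' : 0 < 1 + q := by positivity
  have hl : q / (1 + q) ≤ Real.log (1 + q) := by
    have := Real.one_sub_inv_le_log_of_pos hq'
    convert this using 1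
    field_simp; ring
  have hm : ((A + B) / 2 - y) ^ 2 ≤ (B - A) ^ 2 / 4 := by nlinarith
  have hconv : (C + (r + q * ((A + B) / 2 - C)) / (1 + q) - y) ^ 2 ≤
      (y - C - r) ^ 2 / (1 + q) + q / (1 + q) * ((A + B) / 2 - y) ^ 2 := by
    -- the deficit in Jensen's inequality for the weights `1 / (1 + q)` and `q / (1 + q)`
    have : (y - C - r) ^ 2 / (1 + q) + q / (1 + q) * ((A + B) / 2 - y) ^ 2
        - (C + (r + q * ((A + B) / 2 - C)) / (1 + q) - y) ^ 2
        = q * ((A + B) / 2 - C - r) ^ 2 / (1 + q) ^ 2 := by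
      field_simp; ring
    have : 0 ≤ q * ((A + B) / 2 - C - r) ^ 2 / (1 + q) ^ 2 := by positivity
    linarith
  have h3 : q / (1 + q) * ((A + B) / 2 - y) ^ 2 ≤ Real.log (1 + q) * ((B - A) ^ 2 / 4) :=
    mul_le_mul hl hm (sq_nonneg _) (le_trans (by positivity) hl)
  linarith

/-- A logarithmic form of the inequality between `det` and `trace`: sum
`log (μ / c) ≤ μ / c - 1` over the eigenvalues `μ`. -/
lemma log_det_le_s2 {n : ℕ} {S : Matrix (Fin n) (Fin n) ℝ} (hS : S.PosDef) {c : ℝ} (hc : 0 < c)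
    (htr : S.trace ≤ n * c) : Real.log S.det ≤ n * Real.log c := by
  have hd := hS.isHermitian.det_eq_prod_eigenvalues
  have ht := hS.isHermitian.trace_eq_sum_eigenvalues
  simp only [RCLike.ofReal_real_eq_id, id] at hd ht
  rw [hd, Real.log_prod (fun i _ => (hS.eigenvalues_pos i).ne')]
  have key (i : Fin n) : Real.log (hS.isHermitian.eigenvalues i)
      ≤ hS.isHermitian.eigenvalues i / c - 1 + Real.log c := by
    have hp := hS.eigenvalues_pos i
    have := Real.log_le_sub_one_of_pos (div_pos hp hc)
    rw [Real.log_div hp.ne' hc.ne'] at this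
    linarith
  refine (sum_le_sum fun i _ => key i).trans ?_
  rw [sum_add_distrib, sum_sub_distrib, ← sum_div, ← ht]
  simp only [sum_const, card_univ, Fintype.card_fin, nsmul_eq_mul, mul_one]
  have := (div_le_iff₀ hc).2 htr
  linarith

/-- The potential argument: the forecaster's loss plus the quadratic form at `α - w` is bounded by
the regularised loss of the expert `α` plus the growth of the log-determinant. -/
lemma potential {n : ℕ} (A B C a X : ℝ) (ha : 0 < a) (x : ℕ → Fin n → ℝ) (y : ℕ → ℝ)
    (α : Fin n → ℝ) (t : ℕ) (hx : ∀ s < t, ∀ j, |x s j| ≤ X)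
    (hy : ∀ s < t, y s ∈ Set.Icc A B) :
    let st := fun t : ℕ => ridgeState C a (List.ofFn fun s : Fin t => (x s, y s))
    (st t).1.PosDef ∧ (st t).1.trace ≤ n * (a + t * X ^ 2) ∧
    ∑ s ∈ range t, (ridgePredict C ((A + B) / 2) (st s) (x s) - y s) ^ 2
        + (α - (st t).2) ⬝ᵥ ((st t).1 *ᵥ (α - (st t).2))
      ≤ ∑ s ∈ range t, (C + α ⬝ᵥ x s - y s) ^ 2 + a * (α ⬝ᵥ α)
        + (B - A) ^ 2 / 4 * (Real.log (st t).1.det - n * Real.log a) := by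
  intro st
  have hstep (t : ℕ) : st (t + 1) = ridgeStep C (st t) (x t, y t) := by
    simp only [st, ridgeState, List.ofFn_succ', List.concat_eq_append, List.foldl_append]
    simp
  induction t with
  | zero =>
    have h0 : st 0 = (a • 1, 0) := by simp [st, ridgeState]
    rw [h0]
    refine ⟨PosDef.one.smul ha, by simp [mul_comm], ?_⟩
    simp [smul_mulVec]
  | succ t ih =>
    obtain ⟨hP, htr, hb⟩ := ih (fun s hs => hx s (by omega)) (fun s hs => hy s (by omega))
    have hd := det_step hP (x t)
    have hq := leverage_nonneg hP (x t)
    have hquad := quad_step C hP (x t) (y t) α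
    have hloss := loss_step (C := C) (r := x t ⬝ᵥ (st t).2) (hy t (by omega)) hq
    have h1 : (st (t + 1)).1 = (st t).1 + vecMulVec (x t) (x t) := by rw [hstep]; rfl
    refine ⟨h1 ▸ posDef_step hP (x t), ?_, ?_⟩
    · rw [h1, trace_add, trace_vecMulVec]
      have : x t ⬝ᵥ x t ≤ n * X ^ 2 := by
        have : ∀ j ∈ univ, x t j * x t j ≤ X ^ 2 := fun j _ => by
          rw [← sq, ← sq_abs]
          exact pow_le_pow_left₀ (abs_nonneg _) (hx t (by omega) j) 2
        simpa [dotProduct] using sum_le_card_nsmul univ _ _ this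
      push_cast
      linarith
    · rw [h1, hd, Real.log_mul hP.det_pos.ne' (by positivity), ← h1]
      rw [← hstep] at hquad
      rw [hquad, sum_range_succ, sum_range_succ]
      change (ridgePredict C ((A + B) / 2) (st t) (x t) - y t) ^ 2 ≤ _ at hloss
      linarith

/-- Theoretical bound for the one-dimensional square-loss game with outcomes in [A,B]
and affine experts ξ_t = C + α'x_t: there is an online strategy whose cumulative
square loss exceeds that of any expert α by at most a‖α‖² + (n(B-A)²/4)·ln(TX²/a+1). -/
theorem componentwise_bound (n : ℕ) (hn : 1 ≤ n) (A B C : ℝ) (hAB : A < B)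
    (a : ℝ) (ha : 0 < a) :
    ∃ S : List ((Fin n → ℝ) × ℝ) → (Fin n → ℝ) → ℝ,
      ∀ X : ℝ, 0 < X → ∀ T : ℕ, 1 ≤ T →
        ∀ (x : ℕ → Fin n → ℝ) (y : ℕ → ℝ),
          (∀ t < T, ∀ j, |x t j| ≤ X) →
          (∀ t < T, y t ∈ Set.Icc A B) →
          ∀ α : Fin n → ℝ,
            ∑ t ∈ Finset.range T,
                (S (List.ofFn fun s : Fin t => (x s, y s)) (x t) - y t) ^ 2
              ≤ ∑ t ∈ Finset.range T, (C + (∑ j, α j * x t j) - y t) ^ 2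
                + a * (∑ j, (α j) ^ 2)
                + (n : ℝ) * (B - A) ^ 2 / 4 * Real.log ((T : ℝ) * X ^ 2 / a + 1) := by
  refine ⟨fun l x => ridgePredict C ((A + B) / 2) (ridgeState C a l) x, ?_⟩
  intro X hX T hT x y hx hy α
  obtain ⟨hP, htr, hb⟩ := potential A B C a X ha x y α T hx hy
  have hc : 0 < a + T * X ^ 2 := by positivity
  have hld := log_det_le_s2 hP hc htr
  have hquad := hP.posSemidef.dotProduct_mulVec_nonneg
    (α - (ridgeState C a (List.ofFn fun s : Fin T => (x s, y s))).2)
  simp only [star_trivial] at hquad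
  have hlog : Real.log ((T : ℝ) * X ^ 2 / a + 1) = Real.log (a + T * X ^ 2) - Real.log a := by
    rw [← Real.log_div hc.ne' ha.ne']
    congr 1
    field_simp
    ring
  have hαα : α ⬝ᵥ α = ∑ j, (α j) ^ 2 := by simp [dotProduct, sq]
  rw [hαα] at hb
  have hK := mul_le_mul_of_nonneg_left hld (show 0 ≤ (B - A) ^ 2 / 4 by positivity)
  rw [hlog]
  simp only [dotProduct] at hb hquad
  linarith
end
end

section
/- Let Z be a nonempty set and K : Z × Z → ℝ a symmetric positive-semidefinite kernel. Fix an integer d ≥ 2 and a real a > 0. There exists an online prediction strategy (mKAAR) mapping histories of pairs from Z × Δ together with a current signal in Z to predictions in the probability simplex Δ ⊂ ℝ^d, such that for every positive integer T, all signals x_1, …, x_T ∈ Z, all outcomes y_1, …, y_T ∈ Δ, and all coefficient vectors c_1, …, c_{d−1} ∈ ℝ^T: Σ_{t=1}^T λ(y_t, γ_t) ≤ Σ_{t=1}^T λ(y_t, ξ_t) + a Σ_{i=1}^{d−1} c_i' K̃ c_i + (1/2)·ln det(I_{(d−1)T} + (1/a)·P). Here K̃ is the T×T Gram matrix with K̃_{s,t}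 = K(x_s, x_t); ξ_t ∈ ℝ^d is defined by ξ_t^i = 1/d + Σ_{s=1}^T c_{i,s} K(x_s, x_t) for i = 1, …, d−1 and ξ_t^d = 1 − Σ_{i=1}^{d−1} ξ_t^i; and P is the (d−1)T × (d−1)T block matrix whose (j,l) block (each block T×T, j,l = 1, …, d−1) equals 2K̃ when j = l and K̃ when j ≠ l. -/
open Finset Matrix

noncomputable section

/-- Kernel expert: ξ^i = 1/d + Σ_s c_{i,s} K(x_s, z) for i < d-1, and the last
component is one minus the sum of the others. -/
def kerExpert {Z : Type*} (K : Z → Z → ℝ) (d T : ℕ) (xs : Fin T → Z)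
    (c : Fin (d - 1) → Fin T → ℝ) (z : Z) : Fin d → ℝ :=
  fun i =>
    if h : (i : ℕ) < d - 1 then (1 : ℝ) / d + ∑ s, c ⟨i, h⟩ s * K (xs s) z
    else 1 - ∑ k : Fin (d - 1), ((1 : ℝ) / d + ∑ s, c k s * K (xs s) z)

/-!
The proof runs the Aggregating Algorithm for a Gaussian prior on the experts, with the Gaussian
integrals replaced by linear algebra.

Write `n = d - 1` and keep the first `n` coordinates of points of the hyperplane `∑ i, y i = 1`, on
which the Brier loss becomes the quadratic form of `M = I + J` (`lossMat`). The potential after `T`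
steps is `rᵀ N⁻¹ r + ½ log (det N * det M ^ T)`, where `r` collects the deviations of the outcomes
from `1 / d` and `N = M⁻¹ ⊗ I + a⁻¹ I ⊗ K̃` (`gpMat`). Its first term is at most the regularized loss
of any kernel expert, by Fenchel-Young inequalities (`gpMat_inv_qf_le`), and
`(M ⊗ I) N = I + a⁻¹ M ⊗ K̃` identifies the second with the log-determinant of the bound (`det_gpMat`).

It remains to find, at each step, a prediction in the simplex whose loss is at most the increase of
the potential. By block elimination this increase is `(v - μ)ᵀ S⁻¹ (v - μ) + ½ log (det S * det M)`,
where `v` is the new outcome and the Schur complement `S` satisfies `S ≥ M⁻¹`. Against an outcome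
drawn from a distribution `p` on the vertices, with covariance `C`, the best expected loss is
`tr (M C)`, and it exceeds the expected first term by at most `tr ((M - S⁻¹) C)`. As `C ≤ M⁻¹ / 2`
(`var_le_lossInv`), this is at most `½ (n - tr (S⁻¹ M⁻¹)) ≤ ½ log (det S * det M)`. Optimality
conditions for a quadratic program on the simplex turn the bound for every `p` into a single
prediction good at every vertex (`exists_subst`), and convexity in the outcome extends it to the
whole simplex (`step`).
-/

/-! ### Quadratic forms and determinants -/

/-- The quadratic form `v ↦ vᵀ A v`. -/
def qf {ι : Type*} [Fintype ι] (A : Matrix ι ι ℝ) (v : ι → ℝ) : ℝ := v ⬝ᵥ A *ᵥ v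

lemma exists_sq {n : Type*} [Fintype n] [DecidableEq n] {A : Matrix n n ℝ} (hA : A.PosSemidef) :
    ∃ R : Matrix n n ℝ, A = Rᵀ * R := by
  open scoped MatrixOrder in
  obtain ⟨R, hR⟩ := CStarAlgebra.nonneg_iff_eq_star_mul_self.mp hA.nonneg
  exact ⟨R, by simpa [star_eq_conjTranspose] using hR⟩

lemma qf_gram {m n : Type*} [Fintype m] [Fintype n] (R : Matrix m n ℝ) (v : n → ℝ) :
    qf (Rᵀ * R) v = ∑ j, (R j ⬝ᵥ v) ^ 2 := by
  unfold qf
  rw [← mulVec_mulVec, dotProduct_mulVec, vecMul_transpose, dotProduct]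
  exact Finset.sum_congr rfl fun j _ => by rw [sq]; rfl

lemma log_det_le_s4 {n : Type*} [Fintype n] [DecidableEq n] {A : Matrix n n ℝ} (hA : A.PosDef) :
    Real.log A.det ≤ A.trace - Fintype.card n := by
  have h1 := hA.isHermitian.det_eq_prod_eigenvalues
  have h2 := hA.isHermitian.trace_eq_sum_eigenvalues
  simp only [RCLike.ofReal_real_eq_id, id] at h1 h2
  rw [h1, h2, Real.log_prod (fun i _ => (hA.eigenvalues_pos i).ne')]
  calc _ ≤ ∑ i, (hA.isHermitian.eigenvalues i - 1) :=
        Finset.sum_le_sum fun i _ => Real.log_le_sub_one_of_pos (hA.eigenvalues_pos i)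
    _ = _ := by simp

/-- `log det X ≤ tr X - n` for `X = A B`; such a product is similar to a positive definite matrix. -/
lemma log_det_mul_le {n : Type*} [Fintype n] [DecidableEq n] {A B : Matrix n n ℝ} (hA : A.PosDef)
    (hB : B.PosDef) :
    Real.log (A.det * B.det) ≤ (A * B).trace - Fintype.card n := by
  obtain ⟨R, rfl⟩ := exists_sq hA.posSemidef
  have hdet : R.det ≠ 0 := by
    intro h
    have := hA.det_pos
    simp [h] at this
  have hP : (R * B * Rᵀ).PosDef := by
    have := hB.mul_mul_conjTranspose_same (B := R) (Matrix.vecMul_injective_of_isUnit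
      ((Matrix.isUnit_iff_isUnit_det _).2 hdet.isUnit))
    simpa using this
  have h := log_det_le_s4 hP
  rw [det_mul, det_mul, Matrix.trace_mul_comm, ← Matrix.mul_assoc] at h
  rw [det_mul]
  convert h using 2
  ring

/-! ### Variance bound and substitution rule -/

/-- The variance of `w` under any distribution `p` is at most half of the total squared deviation of
`w` from its unweighted mean: it is at most `(max w - min w)² / 4` by Popoviciu's inequality, and
`(w i - w j)² ≤ 2 ((w i - m)² + (w j - m)²)`. -/
lemma var_le {ι : Type*} [Fintype ι] [Nonempty ι] (p w : ι → ℝ)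
    (hp : p ∈ stdSimplex ℝ ι) :
    ∑ k, p k * (w k - ∑ j, p j * w j) ^ 2
      ≤ 1 / 2 * (∑ k, w k ^ 2 - (∑ k, w k) ^ 2 / Fintype.card ι) := by
  obtain ⟨hp0, hp1⟩ := hp
  obtain ⟨i, -, hi⟩ := Finset.exists_max_image Finset.univ w Finset.univ_nonempty
  obtain ⟨j, -, hj⟩ := Finset.exists_min_image Finset.univ w Finset.univ_nonempty
  set μ := ∑ j, p j * w j with hμ
  -- bias-variance decomposition about an arbitrary centre `c`
  have e1 (c : ℝ) : ∑ k, p k * (w k - c) ^ 2 = ∑ k, p k * (w k - μ) ^ 2 + (μ - c) ^ 2 := by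
    have : ∀ k, p k * (w k - c) ^ 2
        = p k * (w k - μ) ^ 2 + (2 * (μ - c) * (p k * w k) + (c ^ 2 - μ ^ 2) * p k) :=
      fun k => by ring
    simp only [this, Finset.sum_add_distrib, ← Finset.mul_sum, hp1, ← hμ]
    ring
  -- every value is within half the range of the midrange
  have e2 : ∑ k, p k * (w k - (w i + w j) / 2) ^ 2 ≤ (w i - w j) ^ 2 / 4 := by
    calc _ ≤ ∑ k, p k * ((w i - w j) ^ 2 / 4) := by
          refine Finset.sum_le_sum fun k _ => mul_le_mul_of_nonneg_left ?_ (hp0 k)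
          have a1 := hi k (Finset.mem_univ _)
          have a2 := hj k (Finset.mem_univ _)
          nlinarith
      _ = _ := by rw [← Finset.sum_mul, hp1, one_mul]
  set m := (∑ k, w k) / Fintype.card ι with hm
  have hc : (0 : ℝ) < Fintype.card ι := by exact_mod_cast Fintype.card_pos
  have e3 : ∑ k, (w k - m) ^ 2 = ∑ k, w k ^ 2 - (∑ k, w k) ^ 2 / Fintype.card ι := by
    have : ∀ k, (w k - m) ^ 2 = w k ^ 2 + ((-2 * m) * w k + m ^ 2) := fun k => by ring
    simp only [this, Finset.sum_add_distrib, ← Finset.mul_sum, Finset.sum_const, Finset.card_univ,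
      nsmul_eq_mul]
    have hs : ∑ k, w k = m * Fintype.card ι := by rw [hm]; field_simp
    rw [hs]
    field_simp
    ring
  have e4 : (w i - w j) ^ 2 ≤ 2 * ∑ k, (w k - m) ^ 2 := by
    by_cases hij : i = j
    · subst hij
      simp only [sub_self]
      have : 0 ≤ ∑ k, (w k - m) ^ 2 := Finset.sum_nonneg fun _ _ => sq_nonneg _
      nlinarith
    · classical
      have : ∑ k ∈ {i, j}, (w k - m) ^ 2 ≤ ∑ k, (w k - m) ^ 2 :=
        Finset.sum_le_sum_of_subset_of_nonneg (Finset.subset_univ _) fun _ _ _ => sq_nonneg _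
      rw [Finset.sum_pair hij] at this
      nlinarith [sq_nonneg (w i - m + (w j - m))]
  have := e1 ((w i + w j) / 2)
  rw [← e3]
  nlinarith [sq_nonneg (μ - (w i + w j) / 2)]

/-- Substitution rule for the Brier game. Since `1 - ∑ p k ^ 2` is the smallest expected loss when
the outcome is the vertex `k` with probability `p k`, the hypothesis says that the bound `g` is
achievable on average against every `p`; the conclusion gives one prediction `γ` achieving it at
every vertex. The witness is the projection of `-g / 2` onto the simplex. -/
lemma exists_subst {ι : Type*} [Fintype ι] [Nonempty ι] [DecidableEq ι] (g : ι → ℝ)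
    (hg : ∀ p ∈ stdSimplex ℝ ι, 1 - ∑ k, p k ^ 2 ≤ ∑ k, p k * g k) :
    ∃ γ ∈ stdSimplex ℝ ι, ∀ k, 1 - 2 * γ k + ∑ j, γ j ^ 2 ≤ g k := by
  have hne : (stdSimplex ℝ ι).Nonempty := ⟨_, single_mem_stdSimplex ℝ (Classical.arbitrary ι)⟩
  obtain ⟨γ, hγ, hmin⟩ := (isCompact_stdSimplex ℝ ι).exists_isMinOn hne
    (f := fun p => ∑ k, p k ^ 2 + ∑ k, p k * g k) (by fun_prop)
  refine ⟨γ, hγ, fun k => ?_⟩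
  have hF := hg γ hγ
  -- first-order optimality of `γ` in the direction of the vertex `k`
  set v : ι → ℝ := Pi.single k 1 - γ with hv
  set D := ∑ j, (2 * γ j + g j) * v j with hD
  have hDe : D = 2 * γ k + g k - 2 * ∑ j, γ j ^ 2 - ∑ j, γ j * g j := by
    have : ∀ j, (2 * γ j + g j) * v j = (2 * γ j + g j) * (Pi.single k (1 : ℝ) : ι → ℝ) j
        - 2 * γ j ^ 2 - γ j * g j := fun j => by simp only [hv, Pi.sub_apply]; ring
    simp only [hD, this, Finset.sum_sub_distrib, ← Finset.mul_sum]
    simp [Pi.single_apply]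
  have key : ∀ ε : ℝ, 0 < ε → ε ≤ 1 → 0 ≤ D + ε * ∑ j, v j ^ 2 := by
    intro ε h0 h1
    have hmem : γ + ε • v ∈ stdSimplex ℝ ι := by
      have := (convex_stdSimplex ℝ ι) hγ (single_mem_stdSimplex ℝ k) (sub_nonneg.2 h1) h0.le
        (by ring)
      convert this using 1
      rw [hv]; module
    have h := hmin hmem
    simp only [Set.mem_ofPred_eq] at h
    have e : ∑ j, (γ + ε • v) j ^ 2 + ∑ j, (γ + ε • v) j * g j
        = ∑ j, γ j ^ 2 + ∑ j, γ j * g j + ε * (D + ε * ∑ j, v j ^ 2) := by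
      simp only [hD, Finset.mul_sum, ← Finset.sum_add_distrib]
      refine Finset.sum_congr rfl fun j _ => ?_
      simp only [Pi.add_apply, Pi.smul_apply, smul_eq_mul]
      ring
    rw [e] at h
    by_contra hneg
    push Not at hneg
    nlinarith
  have hD0 : 0 ≤ D := by
    have hs : 0 ≤ ∑ j, v j ^ 2 := Finset.sum_nonneg fun _ _ => sq_nonneg _
    by_contra hneg
    push Not at hneg
    have hpos : 0 < min 1 (-D / (2 * (∑ j, v j ^ 2 + 1))) := by
      apply lt_min one_pos; apply div_pos <;> linarith
    have := key _ hpos (min_le_left _ _)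
    have h3 : min 1 (-D / (2 * (∑ j, v j ^ 2 + 1))) * (∑ j, v j ^ 2 ) ≤ -D / 2 := by
      calc _ ≤ -D / (2 * (∑ j, v j ^ 2 + 1)) * (∑ j, v j ^ 2 + 1) := by
            apply mul_le_mul (min_le_right _ _) (by linarith) hs
            apply div_nonneg <;> linarith
        _ = _ := by field_simp
    linarith
  linarith

/-! ### The Brier loss in reduced coordinates -/

/-- The matrix `I + J` of the Brier loss in the first `n` of `n + 1` coordinates, the last one being
determined by the coordinates summing to one. -/
def lossMat (n : ℕ) : Matrix (Fin n) (Fin n) ℝ := Matrix.of fun i j => if i = j then 2 else 1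

/-- The inverse `I - J / (n + 1)` of `lossMat n`. -/
def lossInv (n : ℕ) : Matrix (Fin n) (Fin n) ℝ :=
  Matrix.of fun i j => (if i = j then 1 else 0) - 1 / ((n : ℝ) + 1)

/-- The first `n` of `n + 1` coordinates. -/
def vproj {n : ℕ} (y : Fin (n + 1) → ℝ) : Fin n → ℝ := fun i => y i.castSucc

lemma lossMat_mulVec (n : ℕ) (v : Fin n → ℝ) (i : Fin n) :
    (lossMat n *ᵥ v) i = v i + ∑ j, v j := by
  have : ∀ j, (if i = j then (2 : ℝ) else 1) * v j = (if i = j then v j else 0) + v j := by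
    intro j; split_ifs <;> ring
  simp [lossMat, mulVec, dotProduct, this, Finset.sum_add_distrib]

lemma lossInv_mulVec (n : ℕ) (v : Fin n → ℝ) (i : Fin n) :
    (lossInv n *ᵥ v) i = v i - (∑ j, v j) / (n + 1) := by
  simp [lossInv, mulVec, dotProduct, sub_mul, Finset.sum_sub_distrib, ← Finset.mul_sum]
  ring

lemma qf_lossMat (n : ℕ) (v : Fin n → ℝ) :
    qf (lossMat n) v = ∑ i, v i ^ 2 + (∑ i, v i) ^ 2 := by
  simp only [qf, dotProduct, lossMat_mulVec, mul_add, Finset.sum_add_distrib, ← Finset.sum_mul]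
  simp only [sq]

lemma qf_lossInv (n : ℕ) (v : Fin n → ℝ) :
    qf (lossInv n) v = ∑ i, v i ^ 2 - (∑ i, v i) ^ 2 / (n + 1) := by
  simp only [qf, dotProduct, lossInv_mulVec, mul_sub, Finset.sum_sub_distrib, ← Finset.sum_mul]
  simp only [sq]
  ring

lemma lossMat_mul_lossInv (n : ℕ) : lossMat n * lossInv n = 1 := by
  refine Matrix.toLin'.injective (LinearMap.ext fun v => funext fun i => ?_)
  rw [Matrix.toLin'_apply, ← mulVec_mulVec, lossMat_mulVec]
  simp only [lossInv_mulVec, Finset.sum_sub_distrib]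
  simp
  field_simp
  ring

lemma lossInv_mul_lossMat (n : ℕ) : lossInv n * lossMat n = 1 :=
  mul_eq_one_comm.1 (lossMat_mul_lossInv n)

lemma lossMat_posDef (n : ℕ) : (lossMat n).PosDef := by
  refine .of_dotProduct_mulVec_pos ?_ fun {v} hv => ?_
  · ext i j
    simp [lossMat, eq_comm]
  · have h := qf_lossMat n v
    unfold qf at h
    rw [star_trivial, h]
    obtain ⟨i, hi⟩ := Function.ne_iff.1 hv
    have : 0 < ∑ i, v i ^ 2 := Finset.sum_pos' (fun _ _ => sq_nonneg _)
      ⟨i, Finset.mem_univ _, by have : v i ≠ 0 := hi; positivity⟩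
    positivity

lemma lossInv_eq (n : ℕ) : lossInv n = (lossMat n)⁻¹ :=
  (Matrix.inv_eq_right_inv (lossMat_mul_lossInv n)).symm

lemma lossInv_posDef (n : ℕ) : (lossInv n).PosDef := lossInv_eq n ▸ (lossMat_posDef n).inv

lemma brier_eq_s4 {n : ℕ} {y γ : Fin (n + 1) → ℝ} (h : ∑ i, y i = ∑ i, γ i) :
    brier y γ = qf (lossMat n) (vproj y - vproj γ) := by
  rw [qf_lossMat, brier, Fin.sum_univ_castSucc]
  rw [Fin.sum_univ_castSucc, Fin.sum_univ_castSucc] at h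
  simp only [Pi.sub_apply, vproj, Finset.sum_sub_distrib]
  congr 1
  · exact Finset.sum_congr rfl fun i _ => by ring
  · have : ∑ i : Fin n, y i.castSucc - ∑ i : Fin n, γ i.castSucc
      = γ (Fin.last n) - y (Fin.last n) := by linarith
    rw [this]

lemma bilin_comm {ι : Type*} [Fintype ι] {A : Matrix ι ι ℝ} (hA : A.IsHermitian)
    (u v : ι → ℝ) : u ⬝ᵥ A *ᵥ v = v ⬝ᵥ A *ᵥ u := by
  have hA' : Aᵀ = A := by simpa using hA.eq
  rw [dotProduct_mulVec, ← mulVec_transpose, hA', dotProduct_comm]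

lemma qf_add {ι : Type*} [Fintype ι] {A : Matrix ι ι ℝ} (hA : A.IsHermitian) (u v : ι → ℝ) :
    qf A (u + v) = qf A u + 2 * (u ⬝ᵥ A *ᵥ v) + qf A v := by
  unfold qf
  rw [mulVec_add, add_dotProduct, dotProduct_add, dotProduct_add, bilin_comm hA v u]
  ring

lemma qf_sub {ι : Type*} [Fintype ι] {A : Matrix ι ι ℝ} (hA : A.IsHermitian) (u v : ι → ℝ) :
    qf A (u - v) = qf A u - 2 * (u ⬝ᵥ A *ᵥ v) + qf A v := by
  unfold qf
  rw [mulVec_sub, sub_dotProduct, dotProduct_sub, dotProduct_sub, bilin_comm hA v u]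
  ring

lemma qf_nonneg {ι : Type*} [Fintype ι] {A : Matrix ι ι ℝ} (hA : A.PosSemidef) (u : ι → ℝ) :
    0 ≤ qf A u := by
  simpa [qf] using hA.dotProduct_mulVec_nonneg u

lemma qf_mat_sub {ι : Type*} [Fintype ι] (A B : Matrix ι ι ℝ) (u : ι → ℝ) :
    qf (A - B) u = qf A u - qf B u := by
  simp [qf, sub_mulVec, dotProduct_sub]

/-- Bias-variance decomposition of a quadratic form around the mean `m` of the points `u k`. -/
lemma qf_mean {ι κ : Type*} [Fintype ι] [Fintype κ] {A : Matrix ι ι ℝ} (hA : A.IsHermitian)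
    (p : κ → ℝ) (hp : ∑ k, p k = 1) (u : κ → ι → ℝ) (m : ι → ℝ) (hm : m = ∑ k, p k • u k)
    (c : ι → ℝ) :
    ∑ k, p k * qf A (u k - c) = qf A (m - c) + ∑ k, p k * qf A (u k - m) := by
  have h0 : ∑ k, p k • (u k - m) = 0 := by
    simp only [smul_sub, Finset.sum_sub_distrib, ← hm, ← Finset.sum_smul, hp, one_smul, sub_self]
  have h1 : ∑ k, p k * ((m - c) ⬝ᵥ A *ᵥ (u k - m)) = 0 := by
    have : ∑ k, p k * ((m - c) ⬝ᵥ A *ᵥ (u k - m)) = (m - c) ⬝ᵥ A *ᵥ (∑ k, p k • (u k - m)) := by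
      rw [mulVec_sum, dotProduct_sum]
      exact Finset.sum_congr rfl fun k _ => by rw [mulVec_smul, dotProduct_smul, smul_eq_mul]
    rw [this, h0, mulVec_zero, dotProduct_zero]
  have h2 : ∀ k, p k * qf A (u k - c) = p k * qf A (m - c)
      + 2 * (p k * ((m - c) ⬝ᵥ A *ᵥ (u k - m))) + p k * qf A (u k - m) := by
    intro k
    have : u k - c = (m - c) + (u k - m) := by abel
    rw [this, qf_add hA]
    ring
  simp only [h2, Finset.sum_add_distrib, ← Finset.sum_mul, ← Finset.mul_sum, hp, h1]
  ring

/-- The `k`-th vertex of the simplex. -/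
def vert {n : ℕ} (k : Fin (n + 1)) : Fin (n + 1) → ℝ := Pi.single k 1

lemma vproj_eq {n : ℕ} (p : Fin (n + 1) → ℝ) : vproj p = ∑ k, p k • vproj (vert k) := by
  ext i
  simp [vproj, vert, Finset.sum_apply, Pi.single_apply]

/-- The covariance matrix of the random vertex with law `p`, in the first `n` coordinates, is at most
`lossInv n / 2`. -/
lemma var_le_lossInv {n : ℕ} (p : Fin (n + 1) → ℝ) (hp : p ∈ stdSimplex ℝ (Fin (n + 1)))
    (w : Fin n → ℝ) :
    ∑ k, p k * (w ⬝ᵥ (vproj (vert k) - vproj p)) ^ 2 ≤ 1 / 2 * qf (lossInv n) w := by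
  have h := var_le p (Fin.snoc w 0) hp
  have e1 : ∑ j, p j * (Fin.snoc w 0 : Fin (n + 1) → ℝ) j = w ⬝ᵥ vproj p := by
    rw [Fin.sum_univ_castSucc]
    simp [dotProduct, vproj, mul_comm]
  have e2 : ∀ k, (Fin.snoc w 0 : Fin (n + 1) → ℝ) k = w ⬝ᵥ vproj (vert k) := by
    intro k
    induction k using Fin.lastCases with
    | last => simp [dotProduct, vproj, vert, Fin.castSucc_ne_last]
    | cast i => simp [dotProduct, vproj, vert, Pi.single_apply]
  rw [e1] at h
  simp only [Fin.sum_univ_castSucc (f := fun k => (Fin.snoc w 0 : Fin (n + 1) → ℝ) k),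
    Fin.sum_univ_castSucc (f := fun k => (Fin.snoc w 0 : Fin (n + 1) → ℝ) k ^ 2),
    Fin.snoc_castSucc, Fin.snoc_last, Fintype.card_fin] at h
  rw [qf_lossInv]
  simp only [dotProduct_sub, ← e2]
  convert h using 2
  push_cast
  ring

lemma var_le_trace {n : ℕ} (p : Fin (n + 1) → ℝ) (hp : p ∈ stdSimplex ℝ (Fin (n + 1)))
    {A : Matrix (Fin n) (Fin n) ℝ} (hA : A.PosSemidef) :
    ∑ k, p k * qf A (vproj (vert k) - vproj p) ≤ 1 / 2 * (A * lossInv n).trace := by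
  obtain ⟨R, rfl⟩ := exists_sq hA
  simp only [qf_gram, Finset.mul_sum]
  rw [Finset.sum_comm, Matrix.mul_assoc, Matrix.trace_mul_comm, Matrix.trace, Finset.mul_sum]
  refine Finset.sum_le_sum fun j _ => (var_le_lossInv p hp (R j)).trans_eq ?_
  congr 1
  rw [diag_apply, Matrix.mul_assoc]
  rfl

/-! ### One round of the game -/

/-- Fenchel-Young inequality for the conjugate forms of `lossInv n` and `lossMat n`. -/
lemma two_dot_sub_le {n : ℕ} (w v : Fin n → ℝ) :
    2 * (w ⬝ᵥ v) - qf (lossInv n) w ≤ qf (lossMat n) v := by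
  have h4 := qf_nonneg (lossInv_posDef n).posSemidef (w - lossMat n *ᵥ v)
  rw [qf_sub (lossInv_posDef n).isHermitian] at h4
  simp only [qf, mulVec_mulVec, lossInv_mul_lossMat, one_mulVec] at h4
  rw [dotProduct_comm (lossMat n *ᵥ v) v] at h4
  unfold qf
  linarith

lemma lossMat_sub_inv {n : ℕ} {S : Matrix (Fin n) (Fin n) ℝ} (hS : S.PosDef)
    (hSQ : (S - lossInv n).PosSemidef) : (lossMat n - S⁻¹).PosSemidef := by
  refine .of_dotProduct_mulVec_nonneg ((lossMat_posDef n).isHermitian.sub hS.inv.isHermitian)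
    fun v => ?_
  have hdet : IsUnit S.det := (Matrix.isUnit_iff_isUnit_det _).1 hS.isUnit
  change 0 ≤ qf (lossMat n - S⁻¹) v
  rw [qf_mat_sub]
  set w := S⁻¹ *ᵥ v with hw
  have hSw : S *ᵥ w = v := by rw [hw, mulVec_mulVec, Matrix.mul_nonsing_inv _ hdet, one_mulVec]
  have h1 : qf S⁻¹ v = v ⬝ᵥ w := rfl
  have h2 : qf S w = v ⬝ᵥ w := by rw [qf, hSw, dotProduct_comm]
  have h3 := qf_nonneg hSQ w
  have h4 := two_dot_sub_le w v
  rw [qf_mat_sub, h2] at h3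
  rw [dotProduct_comm w v] at h4
  rw [h1]
  linarith

/-- One round of the game: if the predictive covariance `S` dominates `lossInv n`, some prediction in
the simplex has loss at most the squared Mahalanobis residual plus the log-determinant term, whatever
the outcome. -/
lemma step {n : ℕ} {S : Matrix (Fin n) (Fin n) ℝ} (hS : S.PosDef)
    (hSQ : (S - lossInv n).PosSemidef) (μ : Fin n → ℝ) :
    ∃ γ ∈ stdSimplex ℝ (Fin (n + 1)), ∀ y ∈ stdSimplex ℝ (Fin (n + 1)),
      brier y γ ≤ qf S⁻¹ (vproj y - μ) + 1 / 2 * Real.log (S.det * (lossMat n).det) := by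
  have hE := lossMat_sub_inv hS hSQ
  have hvert : ∀ k : Fin (n + 1), ∑ i, vert k i = 1 := fun k => by simp [vert]
  have hbv : ∀ (k : Fin (n + 1)) (γ : Fin (n + 1) → ℝ),
      brier (vert k) γ = 1 - 2 * γ k + ∑ j, γ j ^ 2 := by
    intro k γ
    have : ∀ i, (γ i - vert k i) ^ 2 = γ i ^ 2 - 2 * (γ i * vert k i) + vert k i := by
      intro i
      simp only [vert, Pi.single_apply]
      split_ifs <;> ring
    simp only [brier, this, Finset.sum_add_distrib, Finset.sum_sub_distrib, ← Finset.mul_sum, hvert]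
    simp [vert, Pi.single_apply]
    ring
  set L := 1 / 2 * Real.log (S.det * (lossMat n).det) with hL
  have hlog : 1 / 2 * ((lossMat n - S⁻¹) * lossInv n).trace ≤ L := by
    have h := log_det_mul_le hS.inv (lossInv_posDef n)
    rw [Matrix.sub_mul, lossMat_mul_lossInv, Matrix.trace_sub, Matrix.trace_one]
    have hd : S⁻¹.det * (lossInv n).det = (S.det * (lossMat n).det)⁻¹ := by
      rw [lossInv_eq, Matrix.det_nonsing_inv, Matrix.det_nonsing_inv, Ring.inverse_eq_inv', mul_inv]
    rw [hd, Real.log_inv] at h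
    rw [hL]
    linarith
  -- By `log det ≤ tr - n`, the log-determinant pays for the variance of the vertices in the form
  -- `lossMat n - S⁻¹`, so the bound is achievable on average against every `p`.
  obtain ⟨γ, hγ, hγk⟩ := exists_subst
    (fun k : Fin (n + 1) => qf S⁻¹ (vproj (vert k) - μ) + L) (by
      intro p hp
      have h1 : 1 - ∑ k, p k ^ 2 = ∑ k, p k * qf (lossMat n) (vproj (vert k) - vproj p) := by
        have : ∀ k, p k * qf (lossMat n) (vproj (vert k) - vproj p)
            = p k * (1 + ∑ j, p j ^ 2) - 2 * p k ^ 2 := by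
          intro k
          rw [← brier_eq_s4 (by rw [hvert, hp.2]), hbv]
          ring
        simp only [this, Finset.sum_sub_distrib, ← Finset.sum_mul, ← Finset.mul_sum, hp.2]
        ring
      have h2 := (var_le_trace p hp hE).trans hlog
      have h3 := qf_mean hS.inv.isHermitian p hp.2 (fun k => vproj (vert k)) _ (vproj_eq p) μ
      have h4 := qf_nonneg hS.inv.posSemidef (vproj p - μ)
      simp only [qf_mat_sub, mul_sub, Finset.sum_sub_distrib] at h2
      simp only [mul_add, Finset.sum_add_distrib, ← Finset.sum_mul, hp.2]
      linarith)
  refine ⟨γ, hγ, fun y hy => ?_⟩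
  -- The bound passes from the vertices to `y` because `lossMat n - S⁻¹` is positive semidefinite,
  -- so that the loss minus the bound is convex in the outcome.
  have h1 := qf_mean hS.inv.isHermitian y hy.2 (fun k => vproj (vert k)) _ (vproj_eq y) μ
  have h2 := qf_mean (lossMat_posDef n).isHermitian y hy.2 (fun k => vproj (vert k)) _
    (vproj_eq y) (vproj γ)
  have h3 : 0 ≤ ∑ k, y k * qf (lossMat n - S⁻¹) (vproj (vert k) - vproj y) :=
    Finset.sum_nonneg fun k _ => mul_nonneg (hy.1 k) (qf_nonneg hE _)
  have h4 : ∑ k, y k * qf (lossMat n) (vproj (vert k) - vproj γ)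
      ≤ ∑ k, y k * (qf S⁻¹ (vproj (vert k) - μ) + L) := by
    refine Finset.sum_le_sum fun k _ => mul_le_mul_of_nonneg_left ?_ (hy.1 k)
    rw [← brier_eq_s4 (by rw [hvert, hγ.2]), hbv]
    exact hγk k
  simp only [qf_mat_sub, mul_sub, Finset.sum_sub_distrib] at h3
  simp only [mul_add, Finset.sum_add_distrib, ← Finset.sum_mul, hy.2] at h4
  rw [brier_eq_s4 (by rw [hy.2, hγ.2])]
  linarith

/-! ### Schur complements -/

open scoped Kronecker

/-- The quadratic form of a Schur complement is that of the whole block matrix at the minimizing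
first component. -/
lemma schur_qf {m k : Type*} [Fintype m] [DecidableEq m] [Fintype k] {A : Matrix m m ℝ}
    (hA : A.PosDef) (B : Matrix m k ℝ) (D : Matrix k k ℝ) (w : k → ℝ) :
    qf (D - Bᵀ * A⁻¹ * B) w = qf (fromBlocks A B Bᵀ D) (Sum.elim (-((A⁻¹ * B) *ᵥ w)) w) := by
  have hdet : IsUnit A.det := (Matrix.isUnit_iff_isUnit_det _).1 hA.isUnit
  have := A.invertibleOfIsUnitDet hdet
  have h := schur_complement_eq₁₁ B D (-((A⁻¹ * B) *ᵥ w)) w hA.isHermitian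
  simp only [star_trivial, neg_add_cancel, zero_vecMul, zero_dotProduct, zero_add,
    conjTranspose_eq_transpose_of_trivial, ← dotProduct_mulVec] at h
  exact h.symm

/-- Block elimination for the quadratic form of the inverse of a block matrix. -/
lemma block_inv_qf {m k : Type*} [Fintype m] [DecidableEq m] [Fintype k] [DecidableEq k]
    {A : Matrix m m ℝ} (hA : A.PosDef) (B : Matrix m k ℝ) (D : Matrix k k ℝ)
    (hS : (D - Bᵀ * A⁻¹ * B).PosDef) (hN : (fromBlocks A B Bᵀ D).PosDef)
    (p : m → ℝ) (q : k → ℝ) :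
    qf (fromBlocks A B Bᵀ D)⁻¹ (Sum.elim p q)
      = qf A⁻¹ p + qf (D - Bᵀ * A⁻¹ * B)⁻¹ (q - Bᵀ *ᵥ (A⁻¹ *ᵥ p)) := by
  have hdA : IsUnit A.det := (Matrix.isUnit_iff_isUnit_det _).1 hA.isUnit
  have hdS : IsUnit (D - Bᵀ * A⁻¹ * B).det := (Matrix.isUnit_iff_isUnit_det _).1 hS.isUnit
  have hdN : IsUnit (fromBlocks A B Bᵀ D).det := (Matrix.isUnit_iff_isUnit_det _).1 hN.isUnit
  set S := D - Bᵀ * A⁻¹ * B with hSdef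
  -- `(w₁, w₂)` is the solution of the block system with right-hand side `(p, q)`
  set w₂ := S⁻¹ *ᵥ (q - Bᵀ *ᵥ (A⁻¹ *ᵥ p)) with hw₂
  set w₁ := A⁻¹ *ᵥ (p - B *ᵥ w₂) with hw₁
  have hSw : S *ᵥ w₂ = q - Bᵀ *ᵥ (A⁻¹ *ᵥ p) := by
    rw [hw₂, mulVec_mulVec, Matrix.mul_nonsing_inv _ hdS, one_mulVec]
  have hsol : fromBlocks A B Bᵀ D *ᵥ Sum.elim w₁ w₂ = Sum.elim p q := by
    rw [fromBlocks_mulVec]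
    simp only [Sum.elim_comp_inl, Sum.elim_comp_inr]
    congr 1
    · rw [hw₁, mulVec_mulVec, Matrix.mul_nonsing_inv _ hdA, one_mulVec, sub_add_cancel]
    · rw [hSdef, sub_mulVec, ← mulVec_mulVec, ← mulVec_mulVec] at hSw
      rw [hw₁, mulVec_sub, mulVec_sub]
      rw [sub_eq_iff_eq_add] at hSw
      rw [hSw]
      abel
  have hinv : (fromBlocks A B Bᵀ D)⁻¹ *ᵥ Sum.elim p q = Sum.elim w₁ w₂ := by
    rw [← hsol, mulVec_mulVec, Matrix.nonsing_inv_mul _ hdN, one_mulVec]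
  have hcross : p ⬝ᵥ A⁻¹ *ᵥ (B *ᵥ w₂) = (Bᵀ *ᵥ (A⁻¹ *ᵥ p)) ⬝ᵥ w₂ := by
    rw [bilin_comm hA.inv.isHermitian, mulVec_transpose, ← dotProduct_mulVec, dotProduct_comm]
  rw [qf, hinv, sumElim_dotProduct_sumElim, qf, qf, hw₁, mulVec_sub, dotProduct_sub, hcross,
    sub_dotProduct]
  ring

/-! ### The potential of the kernel regression -/

section Kernel

variable {Z : Type*}

/-- The Gram matrix of the first `T` signals. -/
def gramMat (K : Z → Z → ℝ) (T : ℕ) (x : ℕ → Z) : Matrix (Fin T) (Fin T) ℝ :=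
  Matrix.of fun s t : Fin T => K (x s) (x t)

/-- The covariance matrix `lossInv n ⊗ I + a⁻¹ I ⊗ K̃` of the first `T` observed residuals, in the
Gaussian process regression that the ridge penalty `a` encodes. -/
def gpMat (K : Z → Z → ℝ) (a : ℝ) (n T : ℕ) (x : ℕ → Z) :
    Matrix (Fin n × Fin T) (Fin n × Fin T) ℝ :=
  lossInv n ⊗ₖ 1 + 1 ⊗ₖ (a⁻¹ • gramMat K T x)

lemma gramMat_posSemidef {K : Z → Z → ℝ} (hsymm : ∀ z z', K z z' = K z' z)
    (hpsd : ∀ (m : ℕ) (x : Fin m → Z) (ξ : Fin m → ℝ),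
      0 ≤ ∑ s, ∑ t, K (x s) (x t) * ξ s * ξ t) (T : ℕ) (x : ℕ → Z) :
    (gramMat K T x).PosSemidef := by
  refine .of_dotProduct_mulVec_nonneg ?_ fun v => ?_
  · ext i j
    simp [gramMat, hsymm (x i)]
  · refine (hpsd T (fun t => x t) v).trans_eq ?_
    simp only [star_trivial, gramMat, dotProduct, mulVec, Finset.mul_sum, Matrix.of_apply]
    exact Finset.sum_congr rfl fun _ _ => Finset.sum_congr rfl fun _ _ => by ring

lemma qf_kronecker_one {n T : ℕ} (A : Matrix (Fin n) (Fin n) ℝ) (u : Fin n × Fin T → ℝ) :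
    qf (A ⊗ₖ (1 : Matrix (Fin T) (Fin T) ℝ)) u = ∑ t, qf A (fun i => u (i, t)) := by
  simp only [qf, dotProduct, mulVec, Fintype.sum_prod_type, kroneckerMap_apply, Matrix.one_apply]
  rw [Finset.sum_comm]
  simp

lemma qf_one_kronecker {n T : ℕ} (A : Matrix (Fin T) (Fin T) ℝ) (u : Fin n × Fin T → ℝ) :
    qf ((1 : Matrix (Fin n) (Fin n) ℝ) ⊗ₖ A) u = ∑ i, qf A (fun t => u (i, t)) := by
  simp only [qf, dotProduct, mulVec, Fintype.sum_prod_type, kroneckerMap_apply, Matrix.one_apply]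
  simp [Finset.sum_comm (s := (Finset.univ : Finset (Fin n))) (t := (Finset.univ : Finset (Fin T)))]

/-- Splits off the last time step. -/
def splitLast (n T : ℕ) : (Fin n × Fin T) ⊕ Fin n ≃ Fin n × Fin (T + 1) where
  toFun := Sum.elim (fun p => (p.1, p.2.castSucc)) (fun i => (i, Fin.last T))
  invFun p := Fin.lastCases (motive := fun _ => (Fin n × Fin T) ⊕ Fin n)
    (Sum.inr p.1) (fun s => Sum.inl (p.1, s)) p.2
  left_inv := by rintro (⟨i, s⟩ | i) <;> simp
  right_inv := by
    rintro ⟨i, t⟩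
    induction t using Fin.lastCases <;> simp

lemma qf_submatrix {ι κ : Type*} [Fintype ι] [Fintype κ] (A : Matrix ι ι ℝ) (e : κ ≃ ι)
    (u : ι → ℝ) : qf (A.submatrix e e) (u ∘ e) = qf A u := by
  have := Matrix.submatrix_mulVec_equiv A (u ∘ e) e e
  rw [qf, this, Function.comp_assoc, Equiv.self_comp_symm, Function.comp_id,
    comp_equiv_dotProduct_comp_equiv]
  rfl

lemma gpMat_posDef (hsymm : ∀ z z', K z z' = K z' z)
    (hpsd : ∀ (m : ℕ) (x : Fin m → Z) (ξ : Fin m → ℝ),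
      0 ≤ ∑ s, ∑ t, K (x s) (x t) * ξ s * ξ t) {a : ℝ} (ha : 0 < a) (n T : ℕ) (x : ℕ → Z) :
    (gpMat K a n T x).PosDef :=
  ((lossInv_posDef n).kronecker PosDef.one).add_posSemidef
    (PosSemidef.one.kronecker ((gramMat_posSemidef hsymm hpsd T x).smul (inv_nonneg.2 ha.le)))

/-- The observation noise alone already bounds the covariance form `gpMat` from below; this is what
makes the Schur complement of the next step dominate `lossInv n`. -/
lemma qf_lossInv_le (hsymm : ∀ z z', K z z' = K z' z)
    (hpsd : ∀ (m : ℕ) (x : Fin m → Z) (ξ : Fin m → ℝ),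
      0 ≤ ∑ s, ∑ t, K (x s) (x t) * ξ s * ξ t) {a : ℝ} (ha : 0 < a) (n T : ℕ) (x : ℕ → Z)
    (u : Fin n × Fin T → ℝ) (t : Fin T) :
    qf (lossInv n) (fun i => u (i, t)) ≤ qf (gpMat K a n T x) u := by
  have h1 := qf_nonneg (PosSemidef.one.kronecker (n := Fin n)
    ((gramMat_posSemidef hsymm hpsd T x).smul (inv_nonneg.2 ha.le))) u
  have h2 := Finset.single_le_sum (f := fun t => qf (lossInv n) (fun i => u (i, t)))
    (fun t _ => qf_nonneg (lossInv_posDef n).posSemidef _) (Finset.mem_univ t)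
  have h3 : qf (gpMat K a n T x) u = qf (lossInv n ⊗ₖ (1 : Matrix (Fin T) (Fin T) ℝ)) u
      + qf ((1 : Matrix (Fin n) (Fin n) ℝ) ⊗ₖ (a⁻¹ • gramMat K T x)) u := by
    simp [gpMat, qf, add_mulVec, dotProduct_add]
  rw [h3, qf_kronecker_one]
  linarith

/-- Deviations of the first `n` coordinates of the outcomes from `1 / (n + 1)`, over `T` steps. -/
def resid (n T : ℕ) (y : ℕ → Fin (n + 1) → ℝ) : Fin n × Fin T → ℝ :=
  fun p => y p.2 p.1.castSucc - 1 / ((n : ℝ) + 1)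

/-- The loss the learner is allowed after `T` steps: the minimal regularized loss of a kernel expert,
in its dual form, plus half of the log-determinant in the bound. -/
def potential_s4 (K : Z → Z → ℝ) (a : ℝ) (n T : ℕ) (x : ℕ → Z) (y : ℕ → Fin (n + 1) → ℝ) : ℝ :=
  qf (gpMat K a n T x)⁻¹ (resid n T y)
    + 1 / 2 * Real.log ((gpMat K a n T x).det * (lossMat n).det ^ T)

/-- Some prediction has loss at most the increase of the potential, whatever the next outcome. The
potential grows by exactly the bound in `step`, with `S` the Schur complement of the old block. The
prediction depends only on `y s` for `s < T`: `y'` stands for any continuation. -/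
lemma potential_step (hsymm : ∀ z z', K z z' = K z' z)
    (hpsd : ∀ (m : ℕ) (x : Fin m → Z) (ξ : Fin m → ℝ),
      0 ≤ ∑ s, ∑ t, K (x s) (x t) * ξ s * ξ t) {a : ℝ} (ha : 0 < a) (n T : ℕ) (x : ℕ → Z)
    (y : ℕ → Fin (n + 1) → ℝ) :
    ∃ γ ∈ stdSimplex ℝ (Fin (n + 1)), ∀ y' : ℕ → Fin (n + 1) → ℝ, (∀ s < T, y' s = y s) →
      y' T ∈ stdSimplex ℝ (Fin (n + 1)) →
      brier (y' T) γ ≤ potential_s4 K a n (T + 1) x y' - potential_s4 K a n T x y := by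
  set A := gpMat K a n T x with hAdef
  set N := gpMat K a n (T + 1) x with hNdef
  have hA : A.PosDef := gpMat_posDef hsymm hpsd ha n T x
  have hN : N.PosDef := gpMat_posDef hsymm hpsd ha n (T + 1) x
  set e := splitLast n T with he
  set B : Matrix (Fin n × Fin T) (Fin n) ℝ := (N.submatrix e e).toBlocks₁₂ with hB
  set D : Matrix (Fin n) (Fin n) ℝ := (N.submatrix e e).toBlocks₂₂ with hD
  have hN' : (N.submatrix e e).PosDef := hN.submatrix e.injective
  have hblk : N.submatrix e e = fromBlocks A B Bᵀ D := by
    rw [← fromBlocks_toBlocks (N.submatrix e e)]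
    have hsym : (N.submatrix e e)ᵀ = N.submatrix e e := by simpa using hN'.isHermitian.eq
    congr 1
    · ext ⟨i, s⟩ ⟨j, t⟩
      simp [toBlocks₁₁, hNdef, hAdef, gpMat, he, splitLast, gramMat, Matrix.one_apply]
    · conv_lhs => rw [← hsym]
      rfl
  rw [hblk] at hN'
  set S := D - Bᵀ * A⁻¹ * B with hSdef
  have hSherm : S.IsHermitian := by
    have hDs : Dᵀ = D := by
      have := hN'.isHermitian.eq
      rw [fromBlocks_conjTranspose] at this
      simpa using (fromBlocks_inj.1 this).2.2.2
    have hAi : (A⁻¹)ᵀ = A⁻¹ := by simpa using hA.inv.isHermitian.eq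
    rw [Matrix.IsHermitian, conjTranspose_eq_transpose_of_trivial, hSdef, transpose_sub, hDs,
      transpose_mul, transpose_mul, hAi, transpose_transpose, Matrix.mul_assoc]
  have hSQ : (S - lossInv n).PosSemidef := by
    refine .of_dotProduct_mulVec_nonneg (hSherm.sub (lossInv_posDef n).isHermitian) fun w => ?_
    change 0 ≤ qf (S - lossInv n) w
    rw [qf_mat_sub, hSdef, schur_qf hA, ← hblk, sub_nonneg]
    set v : (Fin n × Fin T) ⊕ Fin n → ℝ := Sum.elim (-((A⁻¹ * B) *ᵥ w)) w with hv
    have h := qf_lossInv_le hsymm hpsd ha n (T + 1) x (v ∘ e.symm) (Fin.last T)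
    rw [← qf_submatrix _ e, Function.comp_assoc, Equiv.symm_comp_self, Function.comp_id] at h
    convert h using 2
    ext i
    have : e.symm (i, Fin.last T) = Sum.inr i := by
      rw [Equiv.symm_apply_eq]; rfl
    simp [this, hv]
  have hS : S.PosDef := by
    have := (lossInv_posDef n).add_posSemidef hSQ
    rwa [add_sub_cancel] at this
  obtain ⟨γ, hγ, hγb⟩ := step hS hSQ
    (fun i => 1 / ((n : ℝ) + 1) + (Bᵀ *ᵥ (A⁻¹ *ᵥ resid n T y)) i)
  refine ⟨γ, hγ, fun y' hy' hT => (hγb _ hT).trans_eq ?_⟩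
  have hq : qf N⁻¹ (resid n (T + 1) y') = qf A⁻¹ (resid n T y)
      + qf S⁻¹ (vproj (y' T) - fun i => 1 / ((n : ℝ) + 1) + (Bᵀ *ᵥ (A⁻¹ *ᵥ resid n T y)) i) := by
    have hr : resid n (T + 1) y' ∘ e
        = Sum.elim (resid n T y) (fun i => vproj (y' T) i - 1 / ((n : ℝ) + 1)) := by
      ext (⟨i, s⟩ | i)
      · simp [resid, he, splitLast, hy' s s.2]
      · simp [resid, he, splitLast, vproj]
    rw [← qf_submatrix _ e, hr, ← inv_submatrix_equiv, hblk, block_inv_qf hA B D hS hN']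
    congr 2
    ext i
    simp only [Pi.sub_apply]
    ring
  have hd : N.det = A.det * S.det := by
    have := A.invertibleOfIsUnitDet ((Matrix.isUnit_iff_isUnit_det _).1 hA.isUnit)
    rw [← det_submatrix_equiv_self e, hblk, det_fromBlocks₁₁, invOf_eq_nonsing_inv]
  have hM := (lossMat_posDef n).det_pos
  have hlog : Real.log (N.det * (lossMat n).det ^ (T + 1))
      = Real.log (A.det * (lossMat n).det ^ T) + Real.log (S.det * (lossMat n).det) := by
    have := hA.det_pos
    have := hS.det_pos
    rw [← Real.log_mul (by positivity) (by positivity), hd]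
    congr 1
    ring
  rw [potential_s4, potential_s4, ← hAdef, ← hNdef, hq, hlog]
  ring

/-! ### Comparison with the kernel experts -/

lemma potential_congr {K : Z → Z → ℝ} {a : ℝ} {n T : ℕ} {x x' : ℕ → Z}
    {y y' : ℕ → Fin (n + 1) → ℝ} (hx : ∀ s < T, x s = x' s) (hy : ∀ s < T, y s = y' s) :
    potential_s4 K a n T x y = potential_s4 K a n T x' y' := by
  have h1 : gramMat K T x = gramMat K T x' := by
    ext s t
    simp [gramMat, hx s s.2, hx t t.2]
  have h2 : resid n T y = resid n T y' := by
    ext p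
    simp [resid, hy p.2 p.2.2]
  rw [potential_s4, potential_s4, gpMat, gpMat, h1, h2]

/-- Fenchel-Young inequality for the kernel penalty; `G` may be singular. -/
lemma two_dot_sub_le_kernel {ι : Type*} [Fintype ι] {G : Matrix ι ι ℝ} (hG : G.PosSemidef)
    {a : ℝ} (ha : 0 < a) (w c : ι → ℝ) :
    2 * (w ⬝ᵥ G *ᵥ c) - a⁻¹ * qf G w ≤ a * qf G c := by
  have h := qf_nonneg hG (w - a • c)
  rw [qf_sub hG.isHermitian] at h
  have e : qf G (a • c) = a ^ 2 * qf G c := by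
    simp only [qf, mulVec_smul, smul_dotProduct, dotProduct_smul, smul_eq_mul]
    ring
  rw [e, mulVec_smul, dotProduct_smul, smul_eq_mul] at h
  have h' := mul_nonneg (inv_nonneg.2 ha.le) h
  have : a⁻¹ * (qf G w - 2 * (a * (w ⬝ᵥ G *ᵥ c)) + a ^ 2 * qf G c)
      = a⁻¹ * qf G w - 2 * (w ⬝ᵥ G *ᵥ c) + a * qf G c := by
    field_simp
  linarith

/-- Weak duality: the dual form in the potential is at most the regularized loss of every `c`. -/
lemma gpMat_inv_qf_le {K : Z → Z → ℝ} (hsymm : ∀ z z', K z z' = K z' z)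
    (hpsd : ∀ (m : ℕ) (x : Fin m → Z) (ξ : Fin m → ℝ),
      0 ≤ ∑ s, ∑ t, K (x s) (x t) * ξ s * ξ t) {a : ℝ} (ha : 0 < a) (n T : ℕ) (x : ℕ → Z)
    (r : Fin n × Fin T → ℝ) (c : Fin n → Fin T → ℝ) :
    qf (gpMat K a n T x)⁻¹ r
      ≤ ∑ t, qf (lossMat n) (fun i => r (i, t) - (gramMat K T x *ᵥ c i) t)
        + a * ∑ i, qf (gramMat K T x) (c i) := by
  have hN := gpMat_posDef hsymm hpsd ha n T x
  have hG := gramMat_posSemidef hsymm hpsd T x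
  have hdN := (Matrix.isUnit_iff_isUnit_det _).1 hN.isUnit
  set N := gpMat K a n T x with hNdef
  set G := gramMat K T x with hGdef
  set w := N⁻¹ *ᵥ r with hw
  have hNw : N *ᵥ w = r := by rw [hw, mulVec_mulVec, Matrix.mul_nonsing_inv _ hdN, one_mulVec]
  have h1 : qf N⁻¹ r = 2 * (w ⬝ᵥ r) - qf N w := by
    rw [qf, qf, hNw, ← hw, dotProduct_comm r w]
    ring
  have h2 : qf N w = ∑ t, qf (lossInv n) (fun i => w (i, t))
      + ∑ i, a⁻¹ * qf G (fun t => w (i, t)) := by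
    have : qf N w = qf (lossInv n ⊗ₖ (1 : Matrix (Fin T) (Fin T) ℝ)) w
        + qf ((1 : Matrix (Fin n) (Fin n) ℝ) ⊗ₖ (a⁻¹ • G)) w := by
      simp [hNdef, gpMat, qf, add_mulVec, dotProduct_add, hGdef]
    rw [this, qf_kronecker_one, qf_one_kronecker]
    simp [qf, smul_mulVec, dotProduct_smul]
  have h3 : w ⬝ᵥ r = ∑ t, (fun i => w (i, t)) ⬝ᵥ (fun i => r (i, t) - (G *ᵥ c i) t)
      + ∑ i, (fun t => w (i, t)) ⬝ᵥ (G *ᵥ c i) := by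
    simp only [dotProduct, Fintype.sum_prod_type, mul_sub, Finset.sum_sub_distrib]
    rw [Finset.sum_comm (f := fun (t : Fin T) (i : Fin n) => w (i, t) * r (i, t)),
      Finset.sum_comm (f := fun (t : Fin T) (i : Fin n) => w (i, t) * (G *ᵥ c i) t)]
    ring
  have h4 := Finset.sum_le_sum fun (t : Fin T) (_ : t ∈ Finset.univ) =>
    two_dot_sub_le (fun i => w (i, t)) (fun i => r (i, t) - (G *ᵥ c i) t)
  have h5 := Finset.sum_le_sum fun (i : Fin n) (_ : i ∈ Finset.univ) =>
    two_dot_sub_le_kernel hG ha (fun t => w (i, t)) (c i)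
  simp only [Finset.sum_sub_distrib, ← Finset.mul_sum] at h4 h5 h2 ⊢
  rw [h1, h2, h3]
  linarith

lemma det_gpMat (K : Z → Z → ℝ) (a : ℝ) (n T : ℕ) (x : ℕ → Z) :
    (gpMat K a n T x).det * (lossMat n).det ^ T
      = Matrix.det ((1 : Matrix (Fin n × Fin T) (Fin n × Fin T) ℝ)
          + a⁻¹ • Matrix.of fun p q => (if p.1 = q.1 then 2 else 1) * K (x p.2) (x q.2)) := by
  have h1 : (lossMat n ⊗ₖ (1 : Matrix (Fin T) (Fin T) ℝ)).det = (lossMat n).det ^ T := by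
    rw [det_kronecker]
    simp
  rw [← h1, mul_comm, ← det_mul, gpMat, Matrix.mul_add, ← mul_kronecker_mul, ← mul_kronecker_mul,
    lossMat_mul_lossInv, Matrix.mul_one, Matrix.mul_one, Matrix.one_mul, one_kronecker_one]
  congr 2
  ext p q
  simp [lossMat, gramMat, mul_left_comm]

lemma potential_le {K : Z → Z → ℝ} (hsymm : ∀ z z', K z z' = K z' z)
    (hpsd : ∀ (m : ℕ) (x : Fin m → Z) (ξ : Fin m → ℝ),
      0 ≤ ∑ s, ∑ t, K (x s) (x t) * ξ s * ξ t) {a : ℝ} (ha : 0 < a) (n T : ℕ) (x : ℕ → Z)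
    (y : ℕ → Fin (n + 1) → ℝ) (hy : ∀ t < T, y t ∈ stdSimplex ℝ (Fin (n + 1)))
    (c : Fin n → Fin T → ℝ) :
    potential_s4 K a n T x y
      ≤ ∑ t : Fin T, brier (y t) (kerExpert K (n + 1) T (fun s => x s) c (x t))
        + a * ∑ i, c i ⬝ᵥ (gramMat K T x *ᵥ c i)
        + 1 / 2 * Real.log (Matrix.det
            ((1 : Matrix (Fin n × Fin T) (Fin n × Fin T) ℝ)
              + a⁻¹ • Matrix.of fun p q =>
                  (if p.1 = q.1 then 2 else 1) * K (x p.2) (x q.2))) := by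
  rw [potential_s4, det_gpMat]
  have h := gpMat_inv_qf_le hsymm hpsd ha n T x (resid n T y) c
  have e : ∀ t : Fin T, brier (y t) (kerExpert K (n + 1) T (fun s => x s) c (x t))
      = qf (lossMat n) (fun i => resid n T y (i, t) - (gramMat K T x *ᵥ c i) t) := by
    intro t
    have hcast : ∀ i : Fin n, kerExpert K (n + 1) T (fun s => x s) c (x t) i.castSucc
        = 1 / ((n : ℝ) + 1) + ∑ s, c i s * K (x s) (x t) := by
      intro i
      simp [kerExpert]
    have hlast : kerExpert K (n + 1) T (fun s => x s) c (x t) (Fin.last n)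
        = 1 - ∑ i : Fin n, (1 / ((n : ℝ) + 1) + ∑ s, c i s * K (x s) (x t)) := by
      simp [kerExpert]
    rw [brier_eq_s4]
    · congr 1
      ext i
      have : (gramMat K T x *ᵥ c i) t = ∑ s, c i s * K (x s) (x t) := by
        simp only [gramMat, mulVec, dotProduct, Matrix.of_apply]
        exact Finset.sum_congr rfl fun s _ => by rw [hsymm, mul_comm]
      simp only [Pi.sub_apply, vproj, hcast, resid, this]
      ring
    · rw [(hy t t.2).2, Fin.sum_univ_castSucc, hlast]
      simp only [hcast]
      ring
  simp only [e]
  unfold qf at h ⊢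
  linarith

end Kernel

/-- Theoretical bound for the kernelized algorithm mKAAR. -/
theorem mKAAR_bound (Z : Type*) [Nonempty Z] (K : Z → Z → ℝ)
    (hsymm : ∀ z z', K z z' = K z' z)
    (hpsd : ∀ (m : ℕ) (x : Fin m → Z) (ξ : Fin m → ℝ),
      0 ≤ ∑ s, ∑ t, K (x s) (x t) * ξ s * ξ t)
    (d : ℕ) (hd : 2 ≤ d) (a : ℝ) (ha : 0 < a) :
    ∃ S : List (Z × (Fin d → ℝ)) → Z → (Fin d → ℝ),
      (∀ hist z, S hist z ∈ probSimplex d) ∧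
      ∀ T : ℕ, 1 ≤ T → ∀ (x : ℕ → Z) (y : ℕ → Fin d → ℝ),
        (∀ t < T, y t ∈ probSimplex d) →
        ∀ c : Fin (d - 1) → Fin T → ℝ,
          ∑ t : Fin T,
              brier (y t) (S (List.ofFn fun s : Fin (t : ℕ) => (x s, y s)) (x t))
            ≤ ∑ t : Fin T,
                brier (y t) (kerExpert K d T (fun s => x s) c (x t))
              + a * ∑ i : Fin (d - 1),
                  c i ⬝ᵥ ((Matrix.of fun s t : Fin T => K (x s) (x t)) *ᵥ c i)
              + 1 / 2 * Real.log
                  (Matrix.det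
                    ((1 : Matrix (Fin (d - 1) × Fin T) (Fin (d - 1) × Fin T) ℝ)
                      + a⁻¹ • Matrix.of fun p q =>
                          (if p.1 = q.1 then 2 else 1) * K (x p.2) (x q.2))) := by
  obtain ⟨n, rfl⟩ : ∃ n, d = n + 1 := ⟨d - 1, by omega⟩
  -- the default `z` puts the current signal right after the history; the outcomes
  -- past the history do not matter
  choose S hS hSb using fun (hist : List (Z × (Fin (n + 1) → ℝ))) (z : Z) =>
    potential_step hsymm hpsd ha n hist.length (fun s => (hist.map Prod.fst).getD s z)
      (fun s => (hist.map Prod.snd).getD s 0)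
  refine ⟨S, fun hist z => hS hist z, fun T _ x y hy c => ?_⟩
  have hstep : ∀ t < T, brier (y t) (S (List.ofFn fun s : Fin t => (x s, y s)) (x t))
      ≤ potential_s4 K a n (t + 1) x y - potential_s4 K a n t x y := by
    intro t ht
    have h := hSb (List.ofFn fun s : Fin t => (x s, y s)) (x t) y
    simp only [List.length_ofFn] at h
    have hx : ∀ s < t + 1,
        ((List.ofFn fun s : Fin t => (x s, y s)).map Prod.fst).getD s (x t) = x s := by
      intro s hs
      rcases Nat.lt_succ_iff_lt_or_eq.1 hs with h | rfl
      · simp [List.getD_eq_getElem?_getD, h]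
      · simp [List.getD_eq_getElem?_getD]
    have hy' : ∀ s < t,
        ((List.ofFn fun s : Fin t => (x s, y s)).map Prod.snd).getD s 0 = y s := by
      intro s hs
      simp [List.getD_eq_getElem?_getD, hs]
    have h' := h (fun s hs => (hy' s hs).symm) (hy t ht)
    rwa [potential_congr hx (fun _ _ => rfl),
      potential_congr (fun s hs => hx s (hs.trans (Nat.lt_succ_self t))) hy'] at h'
  have hsum : ∑ t : Fin T,
      brier (y t) (S (List.ofFn fun s : Fin (t : ℕ) => (x s, y s)) (x t))
      ≤ potential_s4 K a n T x y := by
    rw [Fin.sum_univ_eq_sum_range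
      (fun t => brier (y t) (S (List.ofFn fun s : Fin t => (x s, y s)) (x t))) T]
    refine (Finset.sum_le_sum fun t ht => hstep t (Finset.mem_range.1 ht)).trans_eq ?_
    -- the potential vanishes at time `0`, where all index types are empty
    rw [Finset.sum_range_sub (fun t => potential_s4 K a n t x y)]
    simp [potential_s4, qf, dotProduct]
  exact hsum.trans (potential_le hsymm hpsd ha n T x y hy c)
end
end
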